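/- Under Assumptions 1.1, 1.2 and 1.3, almost surely on the event Λ ∩ {ξ = 0, r̂ > r} (with θ̂ = lim_n θ_n): ‖∇f(θ_n)‖² = o(γ_n^{−p̂}), |f(θ_n) − f(θ̂)| = o(γ_n^{−p̂}), and ‖θ_n − θ̂‖ = o(γ_n^{−q̂}) as n → ∞, where p̂ = p_{θ̂}, q̂ = q_{θ̂}, r̂ = r_{θ̂}. -/

import Mathlib

open MeasureTheory Filter Asymptotics

/-!
Cut time into blocks of a fixed small length. Summation by parts turns the windowed noise into a
bound of order `j ^ (-r)` for the noise in the `j`-th block, so along the block end points the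
recursion is a gradient descent with a large step: `f` decreases by `c * ‖∇f‖ ^ 2` up to an error
`K * η j ^ 2` with `η j` of order `j ^ (-r)`.

Convergence: adding to `f` a tail of the errors gives a decreasing potential, and by the
Łojasiewicz inequality `‖∇f‖` is bounded by the decrements of a concave power of it, up to a
summable term. Hence the trajectory has finite length.

Rates: let `y` be `f` minus its limit. Linearizing the Łojasiewicz inequality at the scale
`j ^ (-μ * r)` gives `y (j + 1) ≤ y j - κ * j ^ (-r * (2 - μ)) * (|y j| - ε * j ^ (-μ * r))`.
Since `r * (2 - μ) < 1`, this contraction is strong enough to force `y = o(j ^ (-μ * r))`, and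
the descent inequality then bounds `‖∇f‖ ^ 2` by the same rate. Multiplying the descent inequality
by `j ^ r` and telescoping gives `o(j ^ (1 - r))` for the remaining length of the trajectory, hence
for the distance to the limit.
-/

open scoped Topology

section RealPowers

theorem rpow_add_tangent_eq {p x y : ℝ} (hx : 0 < x) :
    x ^ p + p * x ^ (p - 1) * (y - x) = x ^ p * (1 + p * (y / x - 1)) := by
  rw [Real.rpow_sub_one hx.ne']
  field_simp

theorem rpow_eq_rpow_mul_one_add_rpow {p x y : ℝ} (hx : 0 < x) (hy : 0 ≤ y) :
    y ^ p = x ^ p * (1 + (y / x - 1)) ^ p := by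
  rw [add_sub_cancel, ← Real.mul_rpow hx.le (by positivity), mul_div_cancel₀ y hx.ne']

theorem tangent_le_rpow_of_one_le {p x y : ℝ} (hp : 1 ≤ p) (hx : 0 < x) (hy : 0 ≤ y) :
    x ^ p + p * x ^ (p - 1) * (y - x) ≤ y ^ p := by
  rw [rpow_add_tangent_eq hx, rpow_eq_rpow_mul_one_add_rpow (p := p) hx hy]
  have : 0 ≤ y / x := by positivity
  gcongr
  exact one_add_mul_self_le_rpow_one_add (by linarith) hp

theorem rpow_le_tangent_of_le_one {p x y : ℝ} (hp₀ : 0 ≤ p) (hp₁ : p ≤ 1) (hx : 0 < x)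
    (hy : 0 ≤ y) : y ^ p ≤ x ^ p + p * x ^ (p - 1) * (y - x) := by
  rw [rpow_add_tangent_eq hx, rpow_eq_rpow_mul_one_add_rpow (p := p) hx hy]
  have : 0 ≤ y / x := by positivity
  gcongr
  exact rpow_one_add_le_one_add_mul_self (by linarith) hp₀ hp₁

theorem tangent_le_rpow_of_nonpos {p x y : ℝ} (hp : p ≤ 0) (hx : 0 < x) (hy : 0 < y) :
    x ^ p + p * x ^ (p - 1) * (y - x) ≤ y ^ p := by
  rw [rpow_add_tangent_eq hx, rpow_eq_rpow_mul_one_add_rpow (p := p) hx hy.le, add_sub_cancel]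
  have hu : 0 < y / x := by positivity
  gcongr
  calc 1 + p * (y / x - 1) ≤ Real.log (y / x) * p + 1 := by
        linarith [mul_le_mul_of_nonpos_left (Real.log_le_sub_one_of_pos hu) hp]
    _ ≤ (y / x) ^ p := by
        rw [Real.rpow_def_of_pos hu]
        exact Real.add_one_le_exp _

theorem mul_sub_le_rpow_mul_rpow_sub_rpow {p x y : ℝ} (hp₀ : 0 ≤ p) (hp₁ : p ≤ 1) (hx : 0 < x)
    (hy : 0 ≤ y) : p * (x - y) ≤ x ^ (1 - p) * (x ^ p - y ^ p) := by
  have hcancel : x ^ (1 - p) * x ^ (p - 1) = 1 := by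
    rw [← Real.rpow_add hx, sub_add_sub_cancel, sub_self, Real.rpow_zero]
  linear_combination x ^ (1 - p) * rpow_le_tangent_of_le_one hp₀ hp₁ hx hy +
    p * (y - x) * hcancel

theorem rpow_sub_one_mul_sub_le_rpow {a w z : ℝ} (ha : 1 ≤ a) (hw : 0 < w) (hz : 0 ≤ z) :
    w ^ (a - 1) * (z - w) ≤ z ^ a := by
  rcases le_total z w with h | h
  · exact (mul_nonpos_of_nonneg_of_nonpos (by positivity) (sub_nonpos.2 h)).trans (by positivity)
  · calc w ^ (a - 1) * (z - w) ≤ z ^ (a - 1) * z := by gcongr; linarith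
      _ = z ^ a := by rw [← Real.rpow_add_one' hz (by linarith), sub_add_cancel]

theorem add_one_rpow_sub_rpow_le {r x : ℝ} (hr : 1 ≤ r) (hx : 0 ≤ x) :
    (x + 1) ^ r - x ^ r ≤ r * (x + 1) ^ (r - 1) := by
  linarith [tangent_le_rpow_of_one_le hr (by linarith : 0 < x + 1) hx]

theorem rpow_neg_add_one_le_mul_sub {s x : ℝ} (hs : 0 < s) (hx : 1 ≤ x) :
    x ^ (-(s + 1)) ≤ 2 ^ (s + 1) / s * (x ^ (-s) - (x + 1) ^ (-s)) := by
  have htangent := tangent_le_rpow_of_nonpos (neg_nonpos.2 hs.le) (by linarith : 0 < x + 1)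
    (by linarith : 0 < x)
  have hdouble : x ^ (-(s + 1)) ≤ 2 ^ (s + 1) * (x + 1) ^ (-(s + 1)) := by
    rw [Real.rpow_neg (by linarith), Real.rpow_neg (by linarith), ← div_eq_mul_inv,
      inv_le_comm₀ (by positivity) (by positivity), inv_div, div_le_iff₀ (by positivity), mul_comm,
      ← Real.mul_rpow (by norm_num) (by linarith)]
    gcongr
    linarith
  calc x ^ (-(s + 1)) ≤ 2 ^ (s + 1) / s * (s * (x + 1) ^ (-(s + 1))) := by
        rw [div_mul_eq_mul_div, mul_left_comm, mul_div_cancel_left₀ _ hs.ne']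
        exact hdouble
    _ ≤ 2 ^ (s + 1) / s * (x ^ (-s) - (x + 1) ^ (-s)) := by
        rw [neg_add'] at *
        gcongr
        linarith

theorem rpow_neg_sq {x : ℝ} (hx : 0 ≤ x) (r : ℝ) : (x ^ (-r)) ^ 2 = x ^ (-(2 * r)) := by
  rw [← Real.rpow_two, ← Real.rpow_mul hx]
  congr 1
  ring

end RealPowers

section NatPowers

theorem summable_mul_natCast_rpow_neg_rpow_inv {D m s : ℝ} (hD : 0 ≤ D) (hm : 0 < m) (hs : m < s) :
    Summable fun j : ℕ => (D * (j : ℝ) ^ (-s)) ^ m⁻¹ := by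
  have hterm : ∀ j : ℕ, (D * (j : ℝ) ^ (-s)) ^ m⁻¹ = D ^ m⁻¹ * (j : ℝ) ^ (-s * m⁻¹) := fun j => by
    rw [Real.mul_rpow hD (by positivity), Real.rpow_mul j.cast_nonneg]
  simp only [hterm]
  refine (Real.summable_nat_rpow.2 ?_).mul_left _
  rwa [neg_mul, neg_lt_neg_iff, ← div_eq_mul_inv, one_lt_div hm]

theorem isLittleO_natCast_rpow_rpow {p q : ℝ} (hpq : p < q) :
    (fun j : ℕ => (j : ℝ) ^ p) =o[atTop] fun j : ℕ => (j : ℝ) ^ q := by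
  refine IsLittleO.comp_tendsto (f := fun x : ℝ => x ^ p) (g := fun x : ℝ => x ^ q)
    ((isLittleO_iff_tendsto' ?_).2 ?_) tendsto_natCast_atTop_atTop
  · filter_upwards [eventually_gt_atTop 0] with x hx h
    exact absurd h (by positivity)
  · refine (tendsto_rpow_neg_atTop (sub_pos.2 hpq)).congr' ?_
    filter_upwards [eventually_gt_atTop 0] with x hx
    rw [neg_sub, Real.rpow_sub hx]

theorem isBigO_natCast_rpow_rpow {p q : ℝ} (hpq : p ≤ q) :
    (fun j : ℕ => (j : ℝ) ^ p) =O[atTop] fun j : ℕ => (j : ℝ) ^ q := by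
  rcases hpq.eq_or_lt with rfl | h
  exacts [isBigO_refl _ _, (isLittleO_natCast_rpow_rpow h).isBigO]

theorem isBigO_sq_natCast_rpow_neg {u : ℕ → ℝ} {r : ℝ}
    (hu : u =O[atTop] fun j : ℕ => (j : ℝ) ^ (-r)) :
    (fun j => u j ^ 2) =O[atTop] fun j : ℕ => (j : ℝ) ^ (-(2 * r)) :=
  (hu.pow 2).congr_right fun j => rpow_neg_sq j.cast_nonneg r

theorem isLittleO_sq_natCast_rpow_neg {u : ℕ → ℝ} {r : ℝ}
    (hu : u =o[atTop] fun j : ℕ => (j : ℝ) ^ (-r)) :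
    (fun j => u j ^ 2) =o[atTop] fun j : ℕ => (j : ℝ) ^ (-(2 * r)) :=
  (hu.pow two_pos).congr_right fun j => rpow_neg_sq j.cast_nonneg r

theorem isTheta_succ_rpow (p : ℝ) :
    (fun j : ℕ => ((j + 1 : ℕ) : ℝ) ^ p) =Θ[atTop] fun j : ℕ => (j : ℝ) ^ p := by
  refine IsTheta.rpow (Eventually.of_forall fun j => Nat.cast_nonneg _)
    (Eventually.of_forall fun j => j.cast_nonneg) ⟨IsBigO.of_bound 2 ?_, IsBigO.of_bound' ?_⟩
  · filter_upwards [eventually_ge_atTop 1] with j hj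
    rw [Real.norm_natCast, Real.norm_natCast]
    exact_mod_cast (by omega : j + 1 ≤ 2 * j)
  · exact Eventually.of_forall fun j => by simp [abs_of_nonneg, add_nonneg]

theorem isLittleO_rpow_sub_mul_succ {r p : ℝ} (hr : 1 ≤ r) (hp : 2 * r - 1 ≤ p) {u : ℕ → ℝ}
    (hu : u =o[atTop] fun j : ℕ => (j : ℝ) ^ (-p)) :
    (fun j : ℕ => (((j + 1 : ℕ) : ℝ) ^ r - (j : ℝ) ^ r) * u (j + 1)) =o[atTop]
      fun j : ℕ => (j : ℝ) ^ (-r) := by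
  have hdiff : (fun j : ℕ => ((j + 1 : ℕ) : ℝ) ^ r - (j : ℝ) ^ r) =O[atTop]
      fun j : ℕ => ((j + 1 : ℕ) : ℝ) ^ (r - 1) := by
    refine IsBigO.of_bound r (Eventually.of_forall fun j => ?_)
    have hmono : (j : ℝ) ^ r ≤ ((j + 1 : ℕ) : ℝ) ^ r := by gcongr; simp
    rw [Real.norm_of_nonneg (sub_nonneg.2 hmono), Real.norm_of_nonneg (by positivity)]
    exact_mod_cast add_one_rpow_sub_rpow_le hr j.cast_nonneg
  have hprod : (fun j : ℕ => ((j + 1 : ℕ) : ℝ) ^ (r - 1) * ((j + 1 : ℕ) : ℝ) ^ (-p)) =O[atTop]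
      fun j : ℕ => ((j + 1 : ℕ) : ℝ) ^ (-r) := by
    refine ((isBigO_natCast_rpow_rpow (p := r - 1 - p) (q := -r) (by linarith)).comp_tendsto
      (tendsto_add_atTop_nat 1)).congr_left fun j => ?_
    simp only [Function.comp_apply]
    rw [sub_eq_add_neg _ p, Real.rpow_add (by positivity)]
  exact ((hdiff.mul_isLittleO (hu.comp_tendsto (tendsto_add_atTop_nat 1))).trans_isBigO
    hprod).trans_isBigO (isTheta_succ_rpow _).isBigO

theorem eventually_one_sub_mul_rpow_mul_le {κ s q : ℝ} (hκ : 0 < κ) (hs : s < 1) (hq : 0 ≤ q) :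
    ∀ᶠ j : ℕ in atTop, (1 - κ * (j : ℝ) ^ (-s)) * (j : ℝ) ^ (-q) ≤ ((j : ℝ) + 1) ^ (-q) := by
  have hlittle := (isLittleO_natCast_rpow_rpow (neg_lt_neg hs)).const_mul_left q
  filter_upwards [hlittle.bound hκ, eventually_gt_atTop 0] with j hj hpos
  have hj₀ : (0 : ℝ) < j := by exact_mod_cast hpos
  have htangent := tangent_le_rpow_of_nonpos (neg_nonpos.2 hq) hj₀ (by linarith : (0 : ℝ) < j + 1)
  rw [Real.norm_of_nonneg (by positivity), Real.norm_of_nonneg (by positivity)] at hj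
  calc (1 - κ * (j : ℝ) ^ (-s)) * (j : ℝ) ^ (-q)
      ≤ (1 - q * (j : ℝ) ^ (-1 : ℝ)) * (j : ℝ) ^ (-q) := by gcongr
    _ = (j : ℝ) ^ (-q) + -q * (j : ℝ) ^ (-q - 1) * (j + 1 - j) := by
        rw [Real.rpow_neg_one, Real.rpow_sub_one hj₀.ne']
        ring
    _ ≤ ((j : ℝ) + 1) ^ (-q) := htangent

end NatPowers

section RealSequences

theorem eventually_le_of_eventually_succ_le {u : ℕ → ℝ} {l : ℝ} (hu : Tendsto u atTop (𝓝 l))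
    (hstep : ∀ᶠ j in atTop, u (j + 1) ≤ u j) : ∀ᶠ j in atTop, l ≤ u j := by
  obtain ⟨n, hn⟩ := eventually_atTop.1 hstep
  filter_upwards [eventually_ge_atTop n] with j hj
  refine le_of_tendsto hu ?_
  filter_upwards [eventually_ge_atTop j] with k hk
  exact antitoneOn_nat_Ici_of_succ_le hn (Set.mem_Ici.2 hj) (Set.mem_Ici.2 (hj.trans hk)) hk

theorem exists_eventually_le_of_eventually_succ_le {u : ℕ → ℝ}
    (hstep : ∀ᶠ j in atTop, u (j + 1) ≤ u j) : ∃ C, ∀ᶠ j in atTop, u j ≤ C := by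
  obtain ⟨n, hn⟩ := eventually_atTop.1 hstep
  refine ⟨u n, ?_⟩
  filter_upwards [eventually_ge_atTop n] with j hj
  exact antitoneOn_nat_Ici_of_succ_le hn Set.self_mem_Ici (Set.mem_Ici.2 hj) hj

theorem exists_tendsto_of_succ_le_add_summable {u e : ℕ → ℝ} (he : Summable e)
    (hbdd : BddBelow (Set.range u)) (hstep : ∀ᶠ j in atTop, u (j + 1) ≤ u j + e j) :
    ∃ l, Tendsto u atTop (𝓝 l) := by
  obtain ⟨n, hn⟩ := eventually_atTop.1 hstep
  obtain ⟨b, hb⟩ := hbdd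
  obtain ⟨B, hB⟩ := he.hasSum.tendsto_sum_nat.bddAbove_range
  have hanti : Antitone fun j => u (j + n) - ∑ i ∈ Finset.range (j + n), e i := by
    refine antitone_nat_of_succ_le fun j => ?_
    rw [add_right_comm, Finset.sum_range_succ]
    linarith [hn (j + n) (by omega)]
  have hbelow : BddBelow (Set.range fun j => u (j + n) - ∑ i ∈ Finset.range (j + n), e i) := by
    refine ⟨b - B, Set.forall_mem_range.2 fun j => ?_⟩
    linarith [hb (Set.mem_range_self (j + n)), hB (Set.mem_range_self (j + n))]
  have hlim := (tendsto_add_atTop_iff_nat (f := fun j => u j - ∑ i ∈ Finset.range j, e i) n).1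
    (tendsto_atTop_ciInf hanti hbelow)
  exact ⟨_, by simpa using hlim.add he.hasSum.tendsto_sum_nat⟩

theorem summable_of_eventually_le_sub_add {u b h : ℕ → ℝ} (hu : ∀ j, 0 ≤ u j)
    (hb : ∀ᶠ j in atTop, 0 ≤ b j) (hh₀ : ∀ j, 0 ≤ h j) (hh : Summable h)
    (hstep : ∀ᶠ j in atTop, u j ≤ b j - b (j + 1) + h j) : Summable u := by
  obtain ⟨n, hn⟩ := eventually_atTop.1 (hstep.and hb)
  have hh' := (summable_nat_add_iff n).2 hh
  refine (summable_nat_add_iff n).1 (summable_of_sum_range_le (c := b n + ∑' j, h (j + n))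
    (fun j => hu _) fun k => ?_)
  calc ∑ j ∈ Finset.range k, u (j + n)
      ≤ ∑ j ∈ Finset.range k, (b (j + n) - b (j + 1 + n) + h (j + n)) :=
        Finset.sum_le_sum fun j _ => by simpa only [add_right_comm] using (hn (j + n) (by omega)).1
    _ = b n - b (k + n) + ∑ j ∈ Finset.range k, h (j + n) := by
        rw [Finset.sum_add_distrib, Finset.sum_range_sub' fun j => b (j + n), zero_add]
    _ ≤ b n + ∑' j, h (j + n) := by
        linarith [(hn (k + n) (by omega)).2, hh'.sum_le_tsum (Finset.range k) fun j _ => hh₀ _]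

theorem eventually_dist_le_of_eventually_dist_succ_le {X : Type*} [PseudoMetricSpace X]
    {x : ℕ → X} {l : X} {b : ℕ → ℝ} (hx : Tendsto x atTop (𝓝 l)) (hb : Tendsto b atTop (𝓝 0))
    (hstep : ∀ᶠ j in atTop, dist (x j) (x (j + 1)) ≤ b j - b (j + 1)) :
    ∀ᶠ j in atTop, dist (x j) l ≤ b j := by
  obtain ⟨n, hn⟩ := eventually_atTop.1 hstep
  filter_upwards [eventually_ge_atTop n] with j hj
  have hlim : Tendsto (fun k => b j - b k) atTop (𝓝 (b j)) := by
    simpa using tendsto_const_nhds.sub hb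
  refine le_of_tendsto_of_tendsto (tendsto_const_nhds.dist hx) hlim ?_
  filter_upwards [eventually_ge_atTop j] with k hk
  calc dist (x j) (x k) ≤ ∑ i ∈ Finset.Ico j k, (b i - b (i + 1)) :=
        dist_le_Ico_sum_of_dist_le hk fun hji _ => hn _ (hj.trans hji)
    _ = b j - b k := by
        rw [← neg_inj, ← Finset.sum_neg_distrib, neg_sub, ← Finset.sum_Ico_sub b hk]
        simp only [neg_sub]

theorem isLittleO_dist_of_forall_telescoping {X : Type*} [PseudoMetricSpace X] {x : ℕ → X} {l : X}
    (hx : Tendsto x atTop (𝓝 l)) {s : ℝ} (hs : 0 < s)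
    (hstep : ∀ ε > 0, ∃ b : ℕ → ℝ, (b =o[atTop] fun j : ℕ => (j : ℝ) ^ (-s)) ∧
      ∀ᶠ j : ℕ in atTop,
        dist (x j) (x (j + 1)) ≤ b j - b (j + 1) + ε * (j : ℝ) ^ (-(s + 1))) :
    (fun j => dist (x j) l) =o[atTop] fun j : ℕ => (j : ℝ) ^ (-s) := by
  refine isLittleO_iff.2 fun ε hε => ?_
  set C := (2 : ℝ) ^ (s + 1) / s
  have hC : 0 < C := by positivity
  obtain ⟨b, hb, hdist⟩ := hstep (ε / 2 / C) (by positivity)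
  have hpow : Tendsto (fun j : ℕ => (j : ℝ) ^ (-s)) atTop (𝓝 0) :=
    (tendsto_rpow_neg_atTop hs).comp tendsto_natCast_atTop_atTop
  have hB : Tendsto (fun j : ℕ => b j + ε / 2 * (j : ℝ) ^ (-s)) atTop (𝓝 0) := by
    simpa using (hb.trans_tendsto hpow).add (hpow.const_mul (ε / 2))
  have htelescope : ∀ᶠ j : ℕ in atTop, dist (x j) (x (j + 1)) ≤
      (b j + ε / 2 * (j : ℝ) ^ (-s)) - (b (j + 1) + ε / 2 * ((j + 1 : ℕ) : ℝ) ^ (-s)) := by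
    filter_upwards [hdist, eventually_ge_atTop 1] with j hj hj₁
    have hsub := rpow_neg_add_one_le_mul_sub hs (by exact_mod_cast hj₁ : (1 : ℝ) ≤ j)
    have hscaled := mul_le_mul_of_nonneg_left hsub (by positivity : 0 ≤ ε / 2 / C)
    rw [← mul_assoc, div_mul_cancel₀ _ hC.ne'] at hscaled
    push_cast
    linarith
  filter_upwards [eventually_dist_le_of_eventually_dist_succ_le hx hB htelescope,
    hb.bound (half_pos hε)] with j hj hbj
  rw [Real.norm_of_nonneg dist_nonneg]
  have hpos : 0 ≤ (j : ℝ) ^ (-s) := by positivity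
  rw [Real.norm_of_nonneg hpos] at *
  linarith [le_abs_self (b j), Real.norm_eq_abs (b j)]

theorem eventually_le_rpow_neg_of_contraction {κ s : ℝ} (hκ₀ : 0 < κ) (hκ₁ : κ ≤ 1) (hs₀ : 0 ≤ s)
    (hs₁ : s < 1) {v : ℕ → ℝ}
    (hstep : ∀ᶠ j : ℕ in atTop, v (j + 1) ≤ (1 - κ * (j : ℝ) ^ (-s)) * v j) {q : ℝ} (hq : 0 ≤ q) :
    ∀ᶠ j : ℕ in atTop, v j ≤ (j : ℝ) ^ (-q) := by
  have hdecr : ∀ᶠ j : ℕ in atTop,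
      ((j + 1 : ℕ) : ℝ) ^ (q + 1) * max (v (j + 1)) 0 ≤ (j : ℝ) ^ (q + 1) * max (v j) 0 := by
    filter_upwards [hstep, eventually_ge_atTop 1,
      eventually_one_sub_mul_rpow_mul_le hκ₀ hs₁ (by linarith : 0 ≤ q + 1)] with j hj hj₁ hpow
    have hone : (1 : ℝ) ≤ j := by exact_mod_cast hj₁
    have hfactor : 0 ≤ 1 - κ * (j : ℝ) ^ (-s) :=
      sub_nonneg.2 (mul_le_one₀ hκ₁ (by positivity)
        (Real.rpow_le_one_of_one_le_of_nonpos hone (by linarith)))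
    have hmax : max (v (j + 1)) 0 ≤ (1 - κ * (j : ℝ) ^ (-s)) * max (v j) 0 :=
      max_le (hj.trans (by gcongr; exact le_max_left _ _)) (by positivity)
    rw [Real.rpow_neg j.cast_nonneg (q + 1), Real.rpow_neg (by positivity) (q + 1),
      ← div_eq_mul_inv, div_le_iff₀ (by positivity), inv_mul_eq_div,
      le_div_iff₀' (by positivity)] at hpow
    push_cast
    calc ((j : ℝ) + 1) ^ (q + 1) * max (v (j + 1)) 0
        ≤ ((j : ℝ) + 1) ^ (q + 1) * ((1 - κ * (j : ℝ) ^ (-s)) * max (v j) 0) := by gcongr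
      _ ≤ (j : ℝ) ^ (q + 1) * max (v j) 0 := by
          rw [← mul_assoc]
          gcongr
  obtain ⟨C, hbound⟩ := exists_eventually_le_of_eventually_succ_le
    (u := fun j : ℕ => (j : ℝ) ^ (q + 1) * max (v j) 0) hdecr
  filter_upwards [hbound, eventually_gt_atTop 0, eventually_ge_atTop ⌈C⌉₊] with j hj hpos hCj
  have hj₀ : (0 : ℝ) < j := by exact_mod_cast hpos
  calc v j ≤ max (v j) 0 := le_max_left _ _
    _ ≤ C * (j : ℝ) ^ (-(q + 1)) := by
        rwa [Real.rpow_neg hj₀.le, ← div_eq_mul_inv, le_div_iff₀' (by positivity)]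
    _ ≤ j * (j : ℝ) ^ (-(q + 1)) := by gcongr; exact Nat.ceil_le.1 hCj
    _ = (j : ℝ) ^ (-q) := by rw [neg_add', Real.rpow_sub_one hj₀.ne', mul_div_cancel₀ _ hj₀.ne']

theorem eventually_le_of_affine_contraction {κ s b p : ℝ} (hκ₀ : 0 < κ) (hκ₁ : κ ≤ 1) (hs₀ : 0 ≤ s)
    (hs₁ : s < 1) (hb : 0 < b) (hp : 0 ≤ p) {u : ℕ → ℝ}
    (hstep : ∀ᶠ j : ℕ in atTop,
      u (j + 1) ≤ u j - κ * (j : ℝ) ^ (-s) * (u j - b * (j : ℝ) ^ (-p))) :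
    ∀ᶠ j : ℕ in atTop, u j ≤ 3 * b * (j : ℝ) ^ (-p) := by
  have hv : ∀ᶠ j : ℕ in atTop, u (j + 1) - 2 * b * ((j + 1 : ℕ) : ℝ) ^ (-p) ≤
      (1 - κ * (j : ℝ) ^ (-s)) * (u j - 2 * b * (j : ℝ) ^ (-p)) := by
    filter_upwards [hstep, eventually_one_sub_mul_rpow_mul_le (half_pos hκ₀) hs₁ hp] with j hj hpow
    push_cast
    linarith [mul_le_mul_of_nonneg_left hpow (by positivity : 0 ≤ 2 * b)]
  have hsmall := (isLittleO_natCast_rpow_rpow (by linarith : -(p + 1) < -p)).bound hb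
  have hexcess := eventually_le_rpow_neg_of_contraction
    (v := fun j : ℕ => u j - 2 * b * (j : ℝ) ^ (-p)) hκ₀ hκ₁ hs₀ hs₁ hv (by linarith : 0 ≤ p + 1)
  filter_upwards [hsmall, hexcess] with j hj hvj
  rw [Real.norm_of_nonneg (by positivity), Real.norm_of_nonneg (by positivity)] at hj
  linarith

theorem eventually_neg_le_of_linearized_decay {κ s b p : ℝ} (hκ : 0 < κ) (hb : 0 < b) (hp : 0 ≤ p)
    {u : ℕ → ℝ} (hu : Tendsto u atTop (𝓝 0))
    (hstep : ∀ᶠ j : ℕ in atTop,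
      u (j + 1) ≤ u j - κ * (j : ℝ) ^ (-s) * (|u j| - b * (j : ℝ) ^ (-p))) :
    ∀ᶠ j : ℕ in atTop, -(b * (j : ℝ) ^ (-p)) ≤ u j := by
  obtain ⟨n, hn⟩ := eventually_atTop.1 hstep
  filter_upwards [eventually_ge_atTop n, eventually_gt_atTop 0] with j hj hj₀
  by_contra! hlow
  have hpersist : ∀ k, j ≤ k → u k ≤ u j ∧ u k < -(b * (k : ℝ) ^ (-p)) := by
    refine fun k hk => Nat.le_induction ⟨le_rfl, hlow⟩ (fun k hjk ih => ?_) k hk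
    have hk₀ : (0 : ℝ) < k := by exact_mod_cast hj₀.trans_le hjk
    have hdecr : u (k + 1) ≤ u k := (hn k (hj.trans hjk)).trans (sub_le_self _
      (mul_nonneg (by positivity) (by linarith [neg_le_abs (u k)])))
    have hmono : ((k + 1 : ℕ) : ℝ) ^ (-p) ≤ (k : ℝ) ^ (-p) :=
      Real.rpow_le_rpow_of_nonpos hk₀ (by simp) (by linarith)
    exact ⟨hdecr.trans ih.1, by linarith [mul_le_mul_of_nonneg_left hmono hb.le]⟩
  have hlimit : 0 ≤ u j := le_of_tendsto hu (eventually_atTop.2 ⟨j, fun k hk => (hpersist k hk).1⟩)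
  linarith [mul_nonneg hb.le (Real.rpow_nonneg (Nat.cast_nonneg (α := ℝ) j) (-p))]

theorem isLittleO_rpow_neg_of_linearized_decay {s p : ℝ} (hs₀ : 0 ≤ s) (hs₁ : s < 1) (hp : 0 ≤ p)
    {u : ℕ → ℝ} (hu : Tendsto u atTop (𝓝 0))
    (hstep : ∀ ε > 0, ∃ κ, 0 < κ ∧ κ ≤ 1 ∧ ∀ᶠ j : ℕ in atTop,
      u (j + 1) ≤ u j - κ * (j : ℝ) ^ (-s) * (|u j| - ε * (j : ℝ) ^ (-p))) :
    u =o[atTop] fun j : ℕ => (j : ℝ) ^ (-p) := by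
  refine isLittleO_iff.2 fun ε hε => ?_
  obtain ⟨κ, hκ₀, hκ₁, hdecay⟩ := hstep (ε / 3) (by positivity)
  have hupper := eventually_le_of_affine_contraction hκ₀ hκ₁ hs₀ hs₁ (by positivity : 0 < ε / 3) hp
    (hdecay.mono fun j hj => hj.trans (by gcongr; exact le_abs_self _))
  have hlower := eventually_neg_le_of_linearized_decay hκ₀ (by positivity : 0 < ε / 3) hp hu hdecay
  filter_upwards [hupper, hlower] with j hup hlow
  have hpow := Real.rpow_nonneg (Nat.cast_nonneg (α := ℝ) j) (-p)
  rw [Real.norm_eq_abs, Real.norm_of_nonneg hpow]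
  exact abs_le.2 ⟨by nlinarith, by linarith⟩

end RealSequences

/-- Values `y j → 0` (a function along an algorithm, measured from its limit) which at each step
decrease by `c * g j ^ 2` up to an error `e j`, where `g j` (a gradient norm) controls `y j` through
a Łojasiewicz inequality with exponent `μ` and constant `M`. -/
structure LojasiewiczDescent (c M μ : ℝ) (y g e : ℕ → ℝ) : Prop where
  c_pos : 0 < c
  c_le_one : c ≤ 1
  one_le_M : 1 ≤ M
  one_lt_exponent : 1 < μ
  exponent_le_two : μ ≤ 2
  grad_nonneg : ∀ j, 0 ≤ g j
  tendsto_zero : Tendsto y atTop (𝓝 0)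
  descent : ∀ᶠ j in atTop, y (j + 1) ≤ y j - c * g j ^ 2 + e j
  lojasiewicz : ∀ᶠ j in atTop, |y j| ≤ M * g j ^ μ

/-- Concavity of `t ↦ t ^ (1 - 1 / m)` makes the gradient norm telescope. -/
theorem le_mul_rpow_sub_rpow_add {m A c V V' g h : ℝ} (hm : 1 < m) (hA : 0 < A) (hc : 0 < c)
    (hV' : 0 ≤ V') (hh : 0 ≤ h) (hdescent : c * g ^ 2 ≤ V - V')
    (hloj : V ≤ A * (g + h) ^ m) :
    g ≤ A ^ m⁻¹ / (c * (1 - m⁻¹)) * (V ^ (1 - m⁻¹) - V' ^ (1 - m⁻¹)) + h := by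
  have hm₀ : 0 < m⁻¹ := by positivity
  have hm₁ : m⁻¹ < 1 := inv_lt_one_of_one_lt₀ hm
  have hV'V : V' ≤ V := by nlinarith [sq_nonneg g]
  have he : 0 < 1 - m⁻¹ := by linarith
  rcases le_or_gt g h with hgh | hgh
  · have := Real.rpow_le_rpow hV' hV'V he.le
    nlinarith [(by positivity : 0 < A ^ m⁻¹ / (c * (1 - m⁻¹)))]
  have hg₀ : 0 < g := hh.trans_lt hgh
  have hV : 0 < V := by nlinarith [mul_pos hc (pow_pos hg₀ 2)]
  have hroot : V ^ m⁻¹ ≤ A ^ m⁻¹ * (g + h) := by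
    calc V ^ m⁻¹ ≤ (A * (g + h) ^ m) ^ m⁻¹ := by gcongr
      _ = A ^ m⁻¹ * (g + h) := by
          rw [Real.mul_rpow hA.le (by positivity), Real.rpow_rpow_inv (by positivity) (by linarith)]
  have hconcave : (1 - m⁻¹) * (V - V') ≤ V ^ m⁻¹ * (V ^ (1 - m⁻¹) - V' ^ (1 - m⁻¹)) := by
    simpa only [sub_sub_cancel] using
      mul_sub_le_rpow_mul_rpow_sub_rpow he.le (by linarith) hV hV'
  have hdiff : 0 ≤ V ^ (1 - m⁻¹) - V' ^ (1 - m⁻¹) :=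
    sub_nonneg.2 (Real.rpow_le_rpow hV' hV'V he.le)
  rw [← sub_le_iff_le_add, div_mul_eq_mul_div, le_div_iff₀ (by positivity)]
  refine le_of_mul_le_mul_right ?_ (by positivity : 0 < g + h)
  calc (g - h) * (c * (1 - m⁻¹)) * (g + h)
      = (1 - m⁻¹) * (c * g ^ 2) - c * (1 - m⁻¹) * h ^ 2 := by ring
    _ ≤ (1 - m⁻¹) * (V - V') := by
        nlinarith [mul_nonneg (mul_nonneg hc.le he.le) (sq_nonneg h)]
    _ ≤ A ^ m⁻¹ * (g + h) * (V ^ (1 - m⁻¹) - V' ^ (1 - m⁻¹)) :=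
        hconcave.trans (by gcongr)
    _ = _ := by ring

/-- The inequality of arithmetic and geometric means for `ε * w⁻¹` and `w * g ^ 2 / ε`. -/
theorem le_half_mul_inv_add_mul_sq {w ε : ℝ} (hw : 0 < w) (hε : 0 < ε) (g : ℝ) :
    g ≤ ε / 2 * w⁻¹ + 1 / (2 * ε) * (w * g ^ 2) := by
  have hsq : 0 ≤ (ε - w * g) ^ 2 / (2 * ε * w) := by positivity
  have hexpand : (ε - w * g) ^ 2 / (2 * ε * w) =
      ε / 2 * w⁻¹ + 1 / (2 * ε) * (w * g ^ 2) - g := by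
    field_simp
    ring
  linarith

theorem rpow_mul_sub_le_sq {μ M δ r x z g : ℝ} (hμ₁ : 1 < μ) (hμ₂ : μ ≤ 2) (hM : 0 < M)
    (hδ : 0 < δ) (hx : 0 < x) (hg : 0 ≤ g) (hz : 0 ≤ z) (hzg : z ≤ M * g ^ μ) :
    δ ^ (2 / μ - 1) / M * x ^ (-(r * (2 - μ))) * (z - M * δ * x ^ (-(μ * r))) ≤ g ^ 2 := by
  have hweight : (δ * x ^ (-(μ * r))) ^ (2 / μ - 1) =
      δ ^ (2 / μ - 1) * x ^ (-(r * (2 - μ))) := by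
    rw [Real.mul_rpow hδ.le (by positivity), ← Real.rpow_mul hx.le]
    congr 2
    field_simp
  calc _ = (δ * x ^ (-(μ * r))) ^ (2 / μ - 1) * (z / M - δ * x ^ (-(μ * r))) := by
        rw [hweight]
        field_simp
    _ ≤ (z / M) ^ (2 / μ) :=
        rpow_sub_one_mul_sub_le_rpow ((one_le_div (by linarith)).2 hμ₂) (by positivity)
          (by positivity)
    _ ≤ (g ^ μ) ^ (2 / μ) := by
        gcongr
        exact (div_le_iff₀' hM).2 hzg
    _ = g ^ 2 := by rw [← Real.rpow_mul hg, mul_div_cancel₀ _ (by linarith), Real.rpow_two]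

namespace LojasiewiczDescent

variable {c M μ r : ℝ} {y g e : ℕ → ℝ}

theorem exists_potential (h : LojasiewiczDescent c M μ y g e) (hr : 1 / 2 < r)
    (he : e =O[atTop] fun j : ℕ => (j : ℝ) ^ (-(2 * r))) :
    ∃ D, 0 ≤ D ∧ ∀ᶠ j : ℕ in atTop, 0 ≤ y j + D * (j : ℝ) ^ (-(2 * r - 1)) ∧
      c * g j ^ 2 ≤ (y j + D * (j : ℝ) ^ (-(2 * r - 1))) -
        (y (j + 1) + D * ((j + 1 : ℕ) : ℝ) ^ (-(2 * r - 1))) := by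
  have hs : 0 < 2 * r - 1 := by linarith
  obtain ⟨E, hE, hbound⟩ := he.exists_pos
  set D := E * (2 ^ (2 * r) / (2 * r - 1))
  have hdecr : ∀ᶠ j : ℕ in atTop, c * g j ^ 2 ≤ (y j + D * (j : ℝ) ^ (-(2 * r - 1))) -
      (y (j + 1) + D * ((j + 1 : ℕ) : ℝ) ^ (-(2 * r - 1))) := by
    filter_upwards [h.descent, hbound.bound, eventually_ge_atTop 1] with j hj hej hj₁
    have hsub := mul_le_mul_of_nonneg_left (rpow_neg_add_one_le_mul_sub hs
      (by exact_mod_cast hj₁ : (1 : ℝ) ≤ j)) hE.le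
    rw [sub_add_cancel, ← mul_assoc] at hsub
    rw [Real.norm_eq_abs, Real.norm_of_nonneg (by positivity)] at hej
    push_cast
    linarith [le_abs_self (e j)]
  have hlim : Tendsto (fun j : ℕ => y j + D * (j : ℝ) ^ (-(2 * r - 1))) atTop (𝓝 0) := by
    simpa using h.tendsto_zero.add
      (((tendsto_rpow_neg_atTop hs).comp tendsto_natCast_atTop_atTop).const_mul D)
  refine ⟨D, by positivity, (eventually_le_of_eventually_succ_le hlim ?_).and hdecr⟩
  filter_upwards [hdecr] with j hj
  linarith [mul_nonneg h.c_pos.le (sq_nonneg (g j))]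

theorem eventually_grad_le_one (h : LojasiewiczDescent c M μ y g e) (he : Tendsto e atTop (𝓝 0)) :
    ∀ᶠ j in atTop, g j ≤ 1 := by
  have hlim : Tendsto (fun j => y j - y (j + 1) + e j) atTop (𝓝 0) := by
    simpa using (h.tendsto_zero.sub (h.tendsto_zero.comp (tendsto_add_atTop_nat 1))).add he
  filter_upwards [h.descent, hlim.eventually_le_const h.c_pos] with j hj hsmall
  have hsq : g j ^ 2 ≤ 1 := by
    refine le_of_mul_le_mul_left ?_ h.c_pos
    linarith
  exact (sq_le_one_iff₀ (h.grad_nonneg j)).1 hsq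

theorem eventually_add_rpow_le (h : LojasiewiczDescent c M μ y g e) (he : Tendsto e atTop (𝓝 0))
    {m : ℝ} (hm₀ : 0 ≤ m) (hm : m ≤ μ) {b : ℕ → ℝ} (hb : ∀ j, 0 ≤ b j) :
    ∀ᶠ j in atTop, y j + b j ^ m ≤ (M + 1) * (g j + b j) ^ m := by
  filter_upwards [h.lojasiewicz, h.eventually_grad_le_one he] with j hj hg₁
  have hg₀ := h.grad_nonneg j
  have hbj := hb j
  have hM : 0 ≤ M := by linarith [h.one_le_M]
  calc y j + b j ^ m ≤ M * g j ^ μ + b j ^ m := by gcongr; exact (le_abs_self _).trans hj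
    _ ≤ M * g j ^ m + b j ^ m := by
        gcongr ?_ + _
        exact mul_le_mul_of_nonneg_left (Real.rpow_le_rpow_of_exponent_ge' hg₀ hg₁ hm₀ hm) hM
    _ ≤ M * (g j + b j) ^ m + (g j + b j) ^ m := by gcongr <;> linarith
    _ = (M + 1) * (g j + b j) ^ m := by ring

theorem summable_grad (h : LojasiewiczDescent c M μ y g e) (hr : 1 < r)
    (he : e =O[atTop] fun j : ℕ => (j : ℝ) ^ (-(2 * r))) : Summable g := by
  obtain ⟨D, hD, hpotential⟩ := h.exists_potential (by linarith) he
  -- Lowering the exponent `μ` below `2 * r - 1` makes the potential's correction summable.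
  set m := min μ r
  have hm₁ : 1 < m := lt_min h.one_lt_exponent hr
  have hm₀ : 0 < m := by linarith
  have he₀ : Tendsto e atTop (𝓝 0) := he.trans_tendsto
    ((tendsto_rpow_neg_atTop (by linarith : 0 < 2 * r)).comp tendsto_natCast_atTop_atTop)
  set V := fun j : ℕ => y j + D * (j : ℝ) ^ (-(2 * r - 1)) with hV
  set b := fun j : ℕ => (D * (j : ℝ) ^ (-(2 * r - 1))) ^ m⁻¹ with hb
  have hb₀ : ∀ j, 0 ≤ b j := fun j => by positivity
  have hsummable : Summable b :=
    summable_mul_natCast_rpow_neg_rpow_inv hD hm₀ (by linarith [min_le_right μ r])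
  have hbpow : ∀ j, V j = y j + b j ^ m := fun j => by
    simp only [hV, hb]
    rw [Real.rpow_inv_rpow (by positivity) hm₀.ne']
  refine summable_of_eventually_le_sub_add h.grad_nonneg (b := fun j =>
    (M + 1) ^ m⁻¹ / (c * (1 - m⁻¹)) * V j ^ (1 - m⁻¹)) ?_ hb₀ hsummable ?_
  · have := inv_lt_one_of_one_lt₀ hm₁
    have := h.one_le_M
    have := h.c_pos
    filter_upwards [hpotential] with j hj
    exact mul_nonneg (div_nonneg (by positivity) (mul_nonneg (by linarith) (by linarith)))
      (Real.rpow_nonneg hj.1 _)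
  · filter_upwards [hpotential, (tendsto_add_atTop_nat 1).eventually hpotential,
      h.eventually_add_rpow_le he₀ hm₀.le (min_le_left μ r) hb₀] with j hj hj' hloj
    rw [← mul_sub]
    exact le_mul_rpow_sub_rpow_add hm₁ (by linarith [h.one_le_M]) h.c_pos hj'.1 (hb₀ j)
      hj.2 ((hbpow j).trans_le hloj)

theorem linearized_decay (h : LojasiewiczDescent c M μ y g e)
    (he : e =o[atTop] fun j : ℕ => (j : ℝ) ^ (-(2 * r))) {ε : ℝ} (hε : 0 < ε) :
    ∃ κ, 0 < κ ∧ κ ≤ 1 ∧ ∀ᶠ j : ℕ in atTop,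
      y (j + 1) ≤ y j - κ * (j : ℝ) ^ (-(r * (2 - μ))) * (|y j| - ε * (j : ℝ) ^ (-(μ * r))) := by
  have hc := h.c_pos
  have hM := h.one_le_M
  have hμ := h.one_lt_exponent
  have hμ₂ : 1 ≤ 2 / μ := (one_le_div (by linarith)).2 h.exponent_le_two
  set δ := min (ε / (2 * M)) 1
  have hδ₀ : 0 < δ := by positivity
  have hδε : 2 * M * δ ≤ ε := by
    rw [← le_div_iff₀' (by positivity)]
    exact min_le_left _ _
  set κ := c * δ ^ (2 / μ - 1) / M with hκ
  have hκ₀ : 0 < κ := by positivity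
  have hκ₁ : κ ≤ 1 := div_le_one_of_le₀ ((mul_le_one₀ h.c_le_one (by positivity)
    (Real.rpow_le_one hδ₀.le (min_le_right _ _) (by linarith))).trans hM) (by linarith)
  refine ⟨κ, hκ₀, hκ₁, ?_⟩
  filter_upwards [h.descent, h.lojasiewicz, he.bound (by positivity : 0 < κ * (M * δ)),
    eventually_gt_atTop 0] with j hj hloj hej hj₀
  have hj₀ : (0 : ℝ) < j := by exact_mod_cast hj₀
  have hgrad := mul_le_mul_of_nonneg_left
    (rpow_mul_sub_le_sq (r := r) hμ h.exponent_le_two (by linarith) hδ₀ hj₀ (h.grad_nonneg j)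
      (abs_nonneg _) hloj) hc.le
  rw [← mul_assoc, ← mul_assoc, ← mul_div_assoc, ← hκ] at hgrad
  have hsplit : (j : ℝ) ^ (-(2 * r)) = (j : ℝ) ^ (-(r * (2 - μ))) * (j : ℝ) ^ (-(μ * r)) := by
    rw [← Real.rpow_add hj₀]
    congr 1
    ring
  have herror : e j ≤ κ * (j : ℝ) ^ (-(r * (2 - μ))) * (M * δ * (j : ℝ) ^ (-(μ * r))) := by
    rw [Real.norm_eq_abs, Real.norm_of_nonneg (by positivity), hsplit] at hej
    linarith [le_abs_self (e j)]
  have hslack : κ * (j : ℝ) ^ (-(r * (2 - μ))) * (2 * M * δ * (j : ℝ) ^ (-(μ * r))) ≤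
      κ * (j : ℝ) ^ (-(r * (2 - μ))) * (ε * (j : ℝ) ^ (-(μ * r))) := by gcongr
  linarith

theorem isLittleO_value (h : LojasiewiczDescent c M μ y g e) (hr : 0 ≤ r) (hrμ : r * (2 - μ) < 1)
    (he : e =o[atTop] fun j : ℕ => (j : ℝ) ^ (-(2 * r))) :
    y =o[atTop] fun j : ℕ => (j : ℝ) ^ (-(μ * r)) :=
  isLittleO_rpow_neg_of_linearized_decay (mul_nonneg hr (by linarith [h.exponent_le_two])) hrμ
    (mul_nonneg (by linarith [h.one_lt_exponent]) hr) h.tendsto_zero fun _ => h.linearized_decay he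

theorem isLittleO_grad_sq (h : LojasiewiczDescent c M μ y g e) (hr : 0 ≤ r) (hrμ : r * (2 - μ) < 1)
    (he : e =o[atTop] fun j : ℕ => (j : ℝ) ^ (-(2 * r))) :
    (fun j => g j ^ 2) =o[atTop] fun j : ℕ => (j : ℝ) ^ (-(μ * r)) := by
  have hy := h.isLittleO_value hr hrμ he
  have hsucc : (fun j => y (j + 1)) =o[atTop] fun j : ℕ => (j : ℝ) ^ (-(μ * r)) :=
    (hy.comp_tendsto (tendsto_add_atTop_nat 1)).trans_isBigO (isTheta_succ_rpow _).isBigO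
  have herror : e =o[atTop] fun j : ℕ => (j : ℝ) ^ (-(μ * r)) :=
    he.trans_isBigO (isBigO_natCast_rpow_rpow (neg_le_neg
      (mul_le_mul_of_nonneg_right h.exponent_le_two hr)))
  refine (IsBigO.of_bound c⁻¹ ?_).trans_isLittleO ((hy.sub hsucc).add herror)
  filter_upwards [h.descent] with j hj
  rw [Real.norm_of_nonneg (sq_nonneg _), Real.norm_eq_abs, inv_mul_eq_div, le_div_iff₀' h.c_pos]
  exact le_trans (by linarith) (le_abs_self _)

theorem isLittleO_grad (h : LojasiewiczDescent c M μ y g e) (hr : 0 ≤ r) (hrμ : r * (2 - μ) < 1)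
    (he : e =o[atTop] fun j : ℕ => (j : ℝ) ^ (-(2 * r))) :
    g =o[atTop] fun j : ℕ => (j : ℝ) ^ (-(r - 1)) := by
  refine IsLittleO.of_pow (n := 2) ?_ two_ne_zero
  simp only [Pi.pow_def, rpow_neg_sq (Nat.cast_nonneg _)]
  exact (h.isLittleO_grad_sq hr hrμ he).trans_isBigO
    (isBigO_natCast_rpow_rpow (by linarith))

/-- Weighting the descent inequality by `j ^ r` turns `g j ^ 2` into `g j` by
`le_half_mul_inv_add_mul_sq`; summation by parts moves the weight onto `y`. -/
theorem exists_grad_le_weighted_telescoping (h : LojasiewiczDescent c M μ y g e) (hr : 1 ≤ r)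
    (hrμ : r * (2 - μ) < 1) (he : e =o[atTop] fun j : ℕ => (j : ℝ) ^ (-(2 * r))) {ε : ℝ}
    (hε : 0 < ε) :
    ∃ A, ∀ᶠ j : ℕ in atTop, g j ≤
      A * ((j : ℝ) ^ r * y j - ((j + 1 : ℕ) : ℝ) ^ r * y (j + 1)) + ε * (j : ℝ) ^ (-r) := by
  have hc := h.c_pos
  have hparts : (fun j : ℕ => (((j + 1 : ℕ) : ℝ) ^ r - (j : ℝ) ^ r) * y (j + 1)) =o[atTop]
      fun j : ℕ => (j : ℝ) ^ (-r) :=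
    isLittleO_rpow_sub_mul_succ hr (by linarith) (h.isLittleO_value (by linarith) hrμ he)
  have herror : (fun j : ℕ => (j : ℝ) ^ r * e j) =o[atTop] fun j : ℕ => (j : ℝ) ^ (-r) := by
    refine ((isBigO_refl _ _).mul_isLittleO he).congr' .rfl ?_
    filter_upwards [eventually_gt_atTop 0] with j hj
    rw [← Real.rpow_add (by exact_mod_cast hj)]
    congr 1
    ring
  set A := 1 / (2 * ε * c) with hA
  refine ⟨A, ?_⟩
  filter_upwards [h.descent, (hparts.add herror).bound (by positivity : 0 < ε / 2 / A),
    eventually_gt_atTop 0] with j hj hsmall hj₀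
  have hj₀ : (0 : ℝ) < j := by exact_mod_cast hj₀
  have hamgm : g j ≤ ε / 2 * (j : ℝ) ^ (-r) + A * ((j : ℝ) ^ r * (c * g j ^ 2)) := by
    rw [Real.rpow_neg hj₀.le]
    refine (le_half_mul_inv_add_mul_sq (Real.rpow_pos_of_pos hj₀ r) hε (g j)).trans_eq ?_
    rw [hA]
    field_simp
  have hdescent : A * ((j : ℝ) ^ r * (c * g j ^ 2)) ≤
      A * ((j : ℝ) ^ r * (y j - y (j + 1) + e j)) := by
    gcongr
    linarith
  rw [Real.norm_eq_abs, Real.norm_of_nonneg (by positivity), div_mul_eq_mul_div,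
    le_div_iff₀' (by positivity)] at hsmall
  have hA₀ : 0 < A := by positivity
  linarith [mul_le_mul_of_nonneg_left (le_abs_self ((((j + 1 : ℕ) : ℝ) ^ r - (j : ℝ) ^ r) *
    y (j + 1) + (j : ℝ) ^ r * e j)) hA₀.le]

theorem isLittleO_dist (h : LojasiewiczDescent c M μ y g e) (hr : 1 < r)
    (hrμ : r * (2 - μ) < 1) (he : e =o[atTop] fun j : ℕ => (j : ℝ) ^ (-(2 * r)))
    {X : Type*} [PseudoMetricSpace X] {x : ℕ → X} {l : X} (hx : Tendsto x atTop (𝓝 l)) {K : ℝ}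
    (hK : 0 < K) {η : ℕ → ℝ} (hη : η =o[atTop] fun j : ℕ => (j : ℝ) ^ (-r))
    (hstep : ∀ᶠ j in atTop, dist (x j) (x (j + 1)) ≤ K * (g j + η j)) :
    (fun j => dist (x j) l) =o[atTop] fun j : ℕ => (j : ℝ) ^ (-(r - 1)) := by
  refine isLittleO_dist_of_forall_telescoping hx (by linarith) fun ε hε => ?_
  obtain ⟨A, hA⟩ := h.exists_grad_le_weighted_telescoping hr.le hrμ he
    (by positivity : 0 < ε / 2 / K)
  refine ⟨fun j => K * A * ((j : ℝ) ^ r * y j), IsLittleO.const_mul_left ?_ _, ?_⟩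
  · refine ((isBigO_refl _ _).mul_isLittleO
      (h.isLittleO_value (by linarith) hrμ he)).trans_isBigO ?_
    refine (isBigO_natCast_rpow_rpow (p := r - μ * r) (by linarith)).congr' ?_ .rfl
    filter_upwards [eventually_gt_atTop 0] with j hj
    rw [← Real.rpow_add (by exact_mod_cast hj), sub_eq_add_neg]
  · filter_upwards [hstep, hA, hη.bound (by positivity : 0 < ε / 2 / K)] with j hj hgj hηj
    rw [Real.norm_eq_abs, Real.norm_of_nonneg (by positivity)] at hηj
    have hsum := mul_le_mul_of_nonneg_left (add_le_add hgj ((le_abs_self _).trans hηj)) hK.le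
    refine (hj.trans hsum).trans_eq ?_
    rw [sub_add_cancel]
    field_simp
    ring

end LojasiewiczDescent

section GradientSteps

variable {E : Type*} [NormedAddCommGroup E]

section NormedSpace

variable [NormedSpace ℝ E]

theorem norm_sum_range_smul_le_of_antitone {c : ℕ → ℝ} (hc : Antitone c) (hc₀ : ∀ i, 0 ≤ c i)
    {v : ℕ → E} {B : ℝ} {n : ℕ} (hB : ∀ i ≤ n, ‖∑ k ∈ Finset.range i, v k‖ ≤ B) :
    ‖∑ i ∈ Finset.range n, c i • v i‖ ≤ c 0 * B := by
  rcases n with _ | n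
  · simpa using mul_nonneg (hc₀ 0) ((norm_nonneg _).trans (hB 0 le_rfl))
  rw [Finset.sum_range_by_parts, Nat.add_sub_cancel]
  calc _ ≤ ‖c n • ∑ k ∈ Finset.range (n + 1), v k‖ +
        ∑ i ∈ Finset.range n, ‖(c (i + 1) - c i) • ∑ k ∈ Finset.range (i + 1), v k‖ :=
        (norm_sub_le _ _).trans (by gcongr; exact norm_sum_le _ _)
    _ ≤ c n * B + ∑ i ∈ Finset.range n, (c i - c (i + 1)) * B := by
        gcongr with i hi
        · rw [norm_smul, Real.norm_of_nonneg (hc₀ n)]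
          exact mul_le_mul_of_nonneg_left (hB _ le_rfl) (hc₀ n)
        · rw [norm_smul, norm_sub_rev, Real.norm_of_nonneg (sub_nonneg.2 (hc i.le_succ))]
          exact mul_le_mul_of_nonneg_left (hB _ (by grind)) (sub_nonneg.2 (hc i.le_succ))
    _ = c 0 * B := by
        rw [← Finset.sum_mul, Finset.sum_range_sub' c]
        ring

theorem norm_sum_Ico_smul_le_of_weighted {α γ : ℕ → ℝ} {ξ : ℕ → E} (hγ : Monotone γ) {r : ℝ}
    (hr : 0 ≤ r) {n m : ℕ} (hn : 0 < γ n) (hnm : n ≤ m) {ν : ℝ}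
    (hν : ∀ i ∈ Set.Icc n m, ‖∑ k ∈ Finset.Ico n i, (α k * γ k ^ r) • ξ k‖ ≤ ν) :
    ‖∑ k ∈ Finset.Ico n m, α k • ξ k‖ ≤ ν * γ n ^ (-r) := by
  have hpos : ∀ k, 0 < γ (n + k) := fun k => hn.trans_le (hγ (n.le_add_right k))
  have hunweight : ∀ k, α (n + k) • ξ (n + k) =
      γ (n + k) ^ (-r) • (α (n + k) * γ (n + k) ^ r) • ξ (n + k) := fun k => by
    rw [smul_smul, mul_left_comm, ← Real.rpow_add (hpos k), neg_add_cancel, Real.rpow_zero, mul_one]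
  rw [Finset.sum_Ico_eq_sum_range, Finset.sum_congr rfl fun k _ => hunweight k, mul_comm]
  refine norm_sum_range_smul_le_of_antitone (c := fun k => γ (n + k) ^ (-r)) (fun i j hij =>
    Real.rpow_le_rpow_of_nonpos (hpos i) (hγ (by omega)) (by linarith))
    (fun k => Real.rpow_nonneg (hpos k).le _) fun i hi => ?_
  simpa [Finset.sum_Ico_eq_sum_range] using hν (n + i) ⟨by omega, by omega⟩

variable {G : E → E} {s : Set E} {L : NNReal} {α : ℕ → ℝ} {θ ξ : ℕ → E} {n m : ℕ} {η : ℝ}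

theorem norm_sub_add_sum_smul_le (hG : LipschitzOnWith L G s) (hθ : ∀ k, θ k ∈ s)
    (hα : ∀ k, 0 ≤ α k) (hrec : ∀ k, θ (k + 1) = θ k - α k • (G (θ k) + ξ k)) (hnm : n ≤ m)
    (hη : ‖∑ k ∈ Finset.Ico n m, α k • ξ k‖ ≤ η) {D : ℝ}
    (hD : ∀ k ∈ Finset.Ico n m, ‖θ k - θ n‖ ≤ D) :
    ‖θ m - θ n + (∑ k ∈ Finset.Ico n m, α k) • G (θ n)‖ ≤
      (∑ k ∈ Finset.Ico n m, α k) * (L * D) + η := by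
  have hsum : θ m - θ n + (∑ k ∈ Finset.Ico n m, α k) • G (θ n) =
      -(∑ k ∈ Finset.Ico n m, α k • (G (θ k) - G (θ n)) + ∑ k ∈ Finset.Ico n m, α k • ξ k) := by
    rw [← Finset.sum_Ico_sub θ hnm, Finset.sum_smul, ← Finset.sum_add_distrib,
      ← Finset.sum_add_distrib, ← Finset.sum_neg_distrib]
    refine Finset.sum_congr rfl fun k _ => ?_
    rw [hrec k]
    module
  rw [hsum, norm_neg, Finset.sum_mul]
  refine (norm_add_le _ _).trans (add_le_add (norm_sum_le_of_le _ fun k hk => ?_) hη)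
  rw [norm_smul, Real.norm_of_nonneg (hα k)]
  have := (hG.norm_sub_le (hθ k) (hθ n)).trans (mul_le_mul_of_nonneg_left (hD k hk) L.coe_nonneg)
  exact mul_le_mul_of_nonneg_left this (hα k)

theorem norm_sub_le_of_sum_le (hG : LipschitzOnWith L G s) (hθ : ∀ k, θ k ∈ s)
    (hα : ∀ k, 0 ≤ α k) (hrec : ∀ k, θ (k + 1) = θ k - α k • (G (θ k) + ξ k)) {T : ℝ}
    (hTL : T * L ≤ 1 / 2) (hT : ∑ k ∈ Finset.Ico n m, α k ≤ T)
    (hη : ∀ i ∈ Set.Icc n m, ‖∑ k ∈ Finset.Ico n i, α k • ξ k‖ ≤ η) :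
    ∀ i ∈ Set.Icc n m, ‖θ i - θ n‖ ≤ 2 * (T * ‖G (θ n)‖ + η) := by
  intro i
  induction i using Nat.strong_induction_on with
  | _ i ih =>
    rintro ⟨hni, him⟩
    set τ := ∑ k ∈ Finset.Ico n i, α k
    have hτ₀ : 0 ≤ τ := Finset.sum_nonneg fun k _ => hα k
    have hτ : τ ≤ T := (Finset.sum_le_sum_of_subset_of_nonneg
      (Finset.Ico_subset_Ico_right him) fun k _ _ => hα k).trans hT
    have hη₀ : 0 ≤ η := (norm_nonneg _).trans (hη i ⟨hni, him⟩)
    have hT₀ : 0 ≤ T := hτ₀.trans hτ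
    set D := 2 * (T * ‖G (θ n)‖ + η)
    have hD₀ : 0 ≤ D := by positivity
    have hdrift := norm_sub_add_sum_smul_le hG hθ hα hrec hni (hη i ⟨hni, him⟩) (D := D)
      fun k hk => ih k (Finset.mem_Ico.1 hk).2 ⟨(Finset.mem_Ico.1 hk).1, by grind⟩
    calc ‖θ i - θ n‖ = ‖(θ i - θ n + τ • G (θ n)) - τ • G (θ n)‖ := by rw [add_sub_cancel_right]
      _ ≤ (τ * (L * D) + η) + τ * ‖G (θ n)‖ := by
          refine (norm_sub_le _ _).trans (add_le_add hdrift ?_)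
          rw [norm_smul, Real.norm_of_nonneg hτ₀]
      _ ≤ (T * (L * D) + η) + T * ‖G (θ n)‖ := by gcongr
      _ ≤ D := by nlinarith

end NormedSpace

theorem block_increment_le {T K τ g η : ℝ} (hT : 0 < T) (hK : 0 ≤ K) (hTK : T * K ≤ 1 / 64)
    (hτ : T / 2 ≤ τ) (hg : 0 ≤ g) (hη : 0 ≤ η) :
    -(τ * g ^ 2) + g * (T * (K * (2 * (T * g + η))) + η) + K * (2 * (T * g + η)) ^ 2 ≤
      -(T / 8 * g ^ 2) + (8 / T + 8 * K) * η ^ 2 := by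
  have hquad : K * (2 * (T * g + η)) ^ 2 ≤ 8 * (T * K) * (T * g ^ 2) + 8 * K * η ^ 2 := by
    nlinarith [mul_nonneg hK (sq_nonneg (T * g - η))]
  have hcross : 2 * (g * η) ≤ T / 8 * g ^ 2 + 8 / T * η ^ 2 := by
    have hsq : 0 ≤ (T * g - 8 * η) ^ 2 / (8 * T) := by positivity
    have hexpand : (T * g - 8 * η) ^ 2 / (8 * T) =
        T / 8 * g ^ 2 + 8 / T * η ^ 2 - 2 * (g * η) := by
      field_simp
      ring
    linarith
  have hsmall : 0 ≤ 1 / 64 - T * K := sub_nonneg.2 hTK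
  nlinarith [hquad, hcross, mul_nonneg hsmall (by positivity : 0 ≤ T * g ^ 2),
    mul_nonneg hsmall (mul_nonneg hg hη), mul_le_mul_of_nonneg_right hτ (sq_nonneg g)]

section InnerProductSpace

variable [InnerProductSpace ℝ E] [CompleteSpace E] {f : E → ℝ} {s : Set E} {L : NNReal}

theorem abs_sub_sub_inner_gradient_le (hf : Differentiable ℝ f) (hs : Convex ℝ s)
    (hL : LipschitzOnWith L (gradient f) s) {x y : E} (hx : x ∈ s) (hy : y ∈ s) :
    |f y - f x - inner ℝ (gradient f x) (y - x)| ≤ L * ‖y - x‖ ^ 2 := by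
  have hmean := (convex_segment x y).norm_image_sub_le_of_norm_hasFDerivWithin_le' (𝕜 := ℝ)
    (C := L * ‖y - x‖) (φ := InnerProductSpace.toDual ℝ E (gradient f x))
    (fun z _ => (hf z).hasGradientAt.hasFDerivAt.hasFDerivWithinAt) (fun z hz => ?_)
    (left_mem_segment ℝ x y) (right_mem_segment ℝ x y)
  · rwa [Real.norm_eq_abs, InnerProductSpace.toDual_apply_apply, mul_assoc, ← sq] at hmean
  · rw [← map_sub, LinearIsometryEquiv.norm_map]
    refine (hL.norm_sub_le (hs.segment_subset hx hy hz) hx).trans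
      (mul_le_mul_of_nonneg_left ?_ L.coe_nonneg)
    exact norm_sub_le_of_mem_segment hz

theorem abs_sub_le_of_lipschitzOnWith_gradient (hf : Differentiable ℝ f) (hs : Convex ℝ s)
    (hL : LipschitzOnWith L (gradient f) s) {x y : E} (hx : x ∈ s) (hy : y ∈ s) :
    |f y - f x| ≤ ‖gradient f x‖ * ‖y - x‖ + L * ‖y - x‖ ^ 2 := by
  calc |f y - f x| = |inner ℝ (gradient f x) (y - x) +
        (f y - f x - inner ℝ (gradient f x) (y - x))| := by rw [add_sub_cancel]
    _ ≤ ‖gradient f x‖ * ‖y - x‖ + L * ‖y - x‖ ^ 2 := (abs_add_le _ _).trans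
        (add_le_add (abs_real_inner_le_norm _ _) (abs_sub_sub_inner_gradient_le hf hs hL hx hy))

variable {α : ℕ → ℝ} {θ ξ : ℕ → E} {n m : ℕ} {η : ℝ}

theorem value_le_of_block (hf : Differentiable ℝ f) (hs : Convex ℝ s)
    (hL : LipschitzOnWith L (gradient f) s) (hθ : ∀ k, θ k ∈ s) (hα : ∀ k, 0 ≤ α k)
    (hrec : ∀ k, θ (k + 1) = θ k - α k • (gradient f (θ k) + ξ k)) (hnm : n ≤ m) {T : ℝ}
    (hT₀ : 0 < T) (hTL : T * L ≤ 1 / 64) (hT₁ : T / 2 ≤ ∑ k ∈ Finset.Ico n m, α k)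
    (hT₂ : ∑ k ∈ Finset.Ico n m, α k ≤ T)
    (hη : ∀ i ∈ Set.Icc n m, ‖∑ k ∈ Finset.Ico n i, α k • ξ k‖ ≤ η) :
    f (θ m) ≤ f (θ n) - T / 8 * ‖gradient f (θ n)‖ ^ 2 + (8 / T + 8 * L) * η ^ 2 := by
  set τ := ∑ k ∈ Finset.Ico n m, α k
  set g := ‖gradient f (θ n)‖
  have hm : m ∈ Set.Icc n m := ⟨hnm, le_rfl⟩
  have hη₀ : 0 ≤ η := (norm_nonneg _).trans (hη m hm)
  have hclose := norm_sub_le_of_sum_le hL hθ hα hrec (by linarith) hT₂ hη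
  set D := 2 * (T * g + η)
  have hdrift := norm_sub_add_sum_smul_le hL hθ hα hrec hnm (hη m hm)
    fun k hk => hclose k (Set.Ico_subset_Icc_self (Finset.mem_Ico.1 hk))
  have hinner : inner ℝ (gradient f (θ n)) (θ m - θ n) ≤ -(τ * g ^ 2) + g * (T * (L * D) + η) := by
    have hsplit : inner ℝ (gradient f (θ n)) (θ m - θ n) = -(τ * g ^ 2) +
        inner ℝ (gradient f (θ n)) (θ m - θ n + τ • gradient f (θ n)) := by
      rw [inner_add_right, inner_smul_right, real_inner_self_eq_norm_sq]
      ring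
    rw [hsplit]
    gcongr
    exact (real_inner_le_norm _ _).trans (by gcongr; exact hdrift.trans (by gcongr))
  have htaylor := (abs_le.1 (abs_sub_sub_inner_gradient_le hf hs hL (hθ n) (hθ m))).2
  have hquad : L * ‖θ m - θ n‖ ^ 2 ≤ L * D ^ 2 := by gcongr; exact hclose m hm
  linarith [block_increment_le hT₀ L.coe_nonneg hTL hT₁ (norm_nonneg (gradient f (θ n))) hη₀]

end InnerProductSpace

end GradientSteps

section TimeGrids

theorem eventually_exists_mem_Ico {γ : ℕ → ℝ} (hγ : StrictMono γ) (hγ' : Tendsto γ atTop atTop)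
    (hstep : Tendsto (fun n => γ (n + 1) - γ n) atTop (𝓝 0)) {δ : ℝ} (hδ : 0 < δ) :
    ∀ᶠ t in atTop, ∃ n, γ n ∈ Set.Ico t (t + δ) := by
  obtain ⟨n₀, hn₀⟩ := eventually_atTop.1 (hstep.eventually_lt_const hδ)
  filter_upwards [eventually_gt_atTop (γ (0 + n₀))] with t ht
  have hγ₀ : StrictMono fun k => γ (k + n₀) := hγ.comp (strictMono_id.add_const n₀)
  obtain ⟨k, hlt, hle⟩ := hγ₀.exists_between_of_tendsto_atTop
    (hγ'.comp (tendsto_add_atTop_nat n₀)) ht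
  refine ⟨k + 1 + n₀, hle, ?_⟩
  have hsmall := hn₀ (k + n₀) (by omega)
  rw [add_right_comm]
  linarith

theorem eventually_of_forall_block {N : ℕ → ℕ} (hN : StrictMono N) {P : ℕ → Prop}
    (hP : ∀ᶠ j in atTop, ∀ n ∈ Set.Icc (N j) (N (j + 1)), P n) : ∀ᶠ n in atTop, P n := by
  obtain ⟨j₀, hj₀⟩ := eventually_atTop.1 hP
  have hN' : StrictMono fun k => N (k + j₀) := hN.comp (strictMono_id.add_const j₀)
  filter_upwards [eventually_gt_atTop (N (0 + j₀))] with n hn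
  obtain ⟨k, hlt, hle⟩ := hN'.exists_between_of_tendsto_atTop hN'.tendsto_atTop hn
  refine hj₀ (k + j₀) (by omega) n ⟨hlt.le, ?_⟩
  rw [add_right_comm]
  exact hle

/-- The indices `N 0 < N 1 < …` cut the time scale `γ` into blocks whose lengths lie between `T / 2`
and `T`. -/
structure IsTimeGrid (γ : ℕ → ℝ) (T : ℝ) (N : ℕ → ℕ) : Prop where
  strictMono : StrictMono N
  length_pos : 0 < T
  half_le_length : ∀ j, T / 2 ≤ γ (N (j + 1)) - γ (N j)
  length_le : ∀ j, γ (N (j + 1)) - γ (N j) ≤ T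

theorem exists_isTimeGrid {γ : ℕ → ℝ} (hγ : StrictMono γ) (hγ' : Tendsto γ atTop atTop)
    (hstep : Tendsto (fun n => γ (n + 1) - γ n) atTop (𝓝 0)) {T : ℝ} (hT : 0 < T) :
    ∃ N, IsTimeGrid γ T N := by
  obtain ⟨t₀, ht₀⟩ := eventually_atTop.1
    (eventually_exists_mem_Ico hγ hγ' hstep (by positivity : 0 < T / 4))
  choose N hN using fun j : ℕ => ht₀ (t₀ + j * (3 * T / 4)) (by
    have : 0 ≤ (j : ℝ) * (3 * T / 4) := by positivity
    linarith)
  have hlower : ∀ j, T / 2 ≤ γ (N (j + 1)) - γ (N j) := fun j => by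
    have := (hN (j + 1)).1
    push_cast at this
    linarith [(hN j).2]
  refine ⟨N, strictMono_nat_of_lt_succ fun j => hγ.lt_iff_lt.1 ?_, hT, hlower, fun j => ?_⟩
  · linarith [hlower j]
  · have := (hN (j + 1)).2
    push_cast at this
    linarith [(hN j).1]

namespace IsTimeGrid

variable {γ : ℕ → ℝ} {T : ℝ} {N : ℕ → ℕ}

theorem add_mul_half_le (h : IsTimeGrid γ T N) (j : ℕ) : γ (N 0) + j * (T / 2) ≤ γ (N j) := by
  induction j with
  | zero => simp
  | succ j ih => push_cast; linarith [h.half_le_length j]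

theorem le_add_mul (h : IsTimeGrid γ T N) (j : ℕ) : γ (N j) ≤ γ (N 0) + j * T := by
  induction j with
  | zero => simp
  | succ j ih => push_cast; linarith [h.length_le j]

theorem tendsto_comp (h : IsTimeGrid γ T N) : Tendsto (fun j => γ (N j)) atTop atTop :=
  tendsto_atTop_mono h.add_mul_half_le (tendsto_atTop_add_const_left _ _
    (tendsto_natCast_atTop_atTop.atTop_mul_const (half_pos h.length_pos)))

theorem isTheta_natCast (h : IsTimeGrid γ T N) :
    (fun j => γ (N j)) =Θ[atTop] fun j : ℕ => (j : ℝ) := by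
  have hT := h.length_pos
  refine ⟨IsBigO.of_bound (|γ (N 0)| + T) ?_, IsBigO.of_bound (4 / T) ?_⟩
  · filter_upwards [eventually_ge_atTop 1, h.tendsto_comp.eventually_ge_atTop 0] with j hj hγj
    have hj : (1 : ℝ) ≤ j := by exact_mod_cast hj
    rw [Real.norm_of_nonneg hγj, Real.norm_of_nonneg j.cast_nonneg]
    nlinarith [h.le_add_mul j, le_abs_self (γ (N 0)), abs_nonneg (γ (N 0))]
  · filter_upwards [h.tendsto_comp.eventually_ge_atTop 0,
      (tendsto_natCast_atTop_atTop.atTop_mul_const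
        (by positivity : 0 < T / 4)).eventually_ge_atTop (-γ (N 0))] with j hγj hj
    rw [Real.norm_of_nonneg hγj, Real.norm_of_nonneg j.cast_nonneg, div_mul_eq_mul_div,
      le_div_iff₀ hT]
    linarith [h.add_mul_half_le j]

theorem isTheta_rpow (h : IsTimeGrid γ T N) (p : ℝ) :
    (fun j => γ (N j) ^ p) =Θ[atTop] fun j : ℕ => (j : ℝ) ^ p :=
  h.isTheta_natCast.rpow (h.tendsto_comp.eventually_ge_atTop 0)
    (Eventually.of_forall fun j => j.cast_nonneg)

theorem isBigO_mul_rpow (h : IsTimeGrid γ T N) {ν : ℕ → ℝ} (hν : ν =O[atTop] fun _ => (1 : ℝ))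
    (p : ℝ) : (fun j => ν (N j) * γ (N j) ^ p) =O[atTop] fun j : ℕ => (j : ℝ) ^ p := by
  simpa only [Function.comp_apply, one_mul] using
    (hν.comp_tendsto h.strictMono.tendsto_atTop).mul (h.isTheta_rpow p).isBigO

theorem isLittleO_mul_rpow (h : IsTimeGrid γ T N) {ν : ℕ → ℝ} (hν : Tendsto ν atTop (𝓝 0))
    (p : ℝ) : (fun j => ν (N j) * γ (N j) ^ p) =o[atTop] fun j : ℕ => (j : ℝ) ^ p := by
  simpa only [Function.comp_apply, one_mul] using
    (((isLittleO_one_iff ℝ).2 hν).comp_tendsto h.strictMono.tendsto_atTop).mul_isBigO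
      (h.isTheta_rpow p).isBigO

theorem isLittleO_of_block (h : IsTimeGrid γ T N) (hγ : Monotone γ) {F Φ : ℕ → ℝ} {p : ℝ}
    (hp : 0 ≤ p) (hΦ : Φ =o[atTop] fun j : ℕ => (j : ℝ) ^ (-p))
    (hFΦ : ∀ᶠ j in atTop, ∀ n ∈ Set.Icc (N j) (N (j + 1)), |F n| ≤ Φ j) :
    F =o[atTop] fun n => γ n ^ (-p) := by
  have hΦγ : Φ =o[atTop] fun j => γ (N (j + 1)) ^ (-p) :=
    hΦ.trans_isBigO <| (isTheta_succ_rpow (-p)).isBigO_symm.trans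
      ((h.isTheta_rpow (-p)).isBigO_symm.comp_tendsto (tendsto_add_atTop_nat 1))
  refine IsLittleO.of_bound fun ε hε => eventually_of_forall_block h.strictMono ?_
  filter_upwards [hFΦ, hΦγ.bound hε, h.tendsto_comp.eventually_gt_atTop 0] with j hF hbound hγj n hn
  have hγn : 0 < γ n := hγj.trans_le (hγ hn.1)
  have hγj' : 0 < γ (N (j + 1)) := hγn.trans_le (hγ hn.2)
  calc ‖F n‖ ≤ Φ j := hF n hn
    _ ≤ ε * ‖γ (N (j + 1)) ^ (-p)‖ := (le_abs_self _).trans hbound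
    _ ≤ ε * ‖γ n ^ (-p)‖ := by
        rw [Real.norm_of_nonneg (by positivity), Real.norm_of_nonneg (by positivity)]
        gcongr ε * ?_
        exact Real.rpow_le_rpow_of_nonpos hγn (hγ hn.2) (neg_nonpos.2 hp)

end IsTimeGrid

end TimeGrids

section BlockDescents

variable {E : Type*} [NormedAddCommGroup E] [InnerProductSpace ℝ E] [CompleteSpace E]

/-- The iterates `θ` stay within `K * (‖∇f‖ + η j)` of the left end point of the `j`-th block
`[N j, N (j + 1)]`, and over that block `f` decreases by `c * ‖∇f‖ ^ 2` up to an error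
`K * η j ^ 2`, gradients being taken at the left end point. -/
structure BlockDescent (f : E → ℝ) (θ : ℕ → E) (N : ℕ → ℕ) (c K : ℝ) (η : ℕ → ℝ) : Prop where
  c_pos : 0 < c
  c_le_one : c ≤ 1
  K_pos : 0 < K
  strictMono : StrictMono N
  descent : ∀ᶠ j in atTop, f (θ (N (j + 1))) ≤
    f (θ (N j)) - c * ‖gradient f (θ (N j))‖ ^ 2 + K * η j ^ 2
  dist_le : ∀ᶠ j in atTop, ∀ n ∈ Set.Icc (N j) (N (j + 1)),
    dist (θ n) (θ (N j)) ≤ K * (‖gradient f (θ (N j))‖ + η j)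

theorem IsTimeGrid.blockDescent {γ α : ℕ → ℝ} {T : ℝ} {N : ℕ → ℕ} (hN : IsTimeGrid γ T N)
    {f : E → ℝ} (hf : Differentiable ℝ f) {s : Set E} (hs : Convex ℝ s) {L : NNReal}
    (hL : LipschitzOnWith L (gradient f) s) {θ ξ : ℕ → E} (hθ : ∀ k, θ k ∈ s) (hα : ∀ k, 0 ≤ α k)
    (hγ : ∀ k, γ (k + 1) - γ k = α k)
    (hrec : ∀ k, θ (k + 1) = θ k - α k • (gradient f (θ k) + ξ k)) (hT : T ≤ 1)
    (hTL : T * L ≤ 1 / 64) {r : ℝ} (hr : 0 ≤ r) {ν : ℕ → ℝ}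
    (hν : ∀ n i, n ≤ i → γ i - γ n ≤ 1 → ‖∑ k ∈ Finset.Ico n i, (α k * γ k ^ r) • ξ k‖ ≤ ν n) :
    BlockDescent f θ N (T / 8) (8 / T + 8 * L) fun j => ν (N j) * γ (N j) ^ (-r) := by
  have hT₀ := hN.length_pos
  have hlt := hN.strictMono
  have hmono : Monotone γ := monotone_nat_of_le_succ fun k => by linarith [hα k, hγ k]
  have hsum : ∀ j, ∑ k ∈ Finset.Ico (N j) (N (j + 1)), α k = γ (N (j + 1)) - γ (N j) := fun j => by
    simp only [← hγ, Finset.sum_Ico_sub γ (hlt j.lt_succ_self).le]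
  have hnoise : ∀ᶠ j in atTop, ∀ n ∈ Set.Icc (N j) (N (j + 1)),
      ‖∑ k ∈ Finset.Ico (N j) n, α k • ξ k‖ ≤ ν (N j) * γ (N j) ^ (-r) := by
    filter_upwards [hN.tendsto_comp.eventually_gt_atTop 0] with j hj n hn
    refine norm_sum_Ico_smul_le_of_weighted hmono hr hj hn.1 fun i hi => hν _ i hi.1 ?_
    linarith [hmono (hi.2.trans hn.2), hN.length_le j]
  refine ⟨by positivity, by linarith, by positivity, hlt, ?_, ?_⟩
  · filter_upwards [hnoise] with j hj
    exact value_le_of_block hf hs hL hθ hα hrec (hlt j.lt_succ_self).le hT₀ hTL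
      ((hN.half_le_length j).trans_eq (hsum j).symm) ((hsum j).trans_le (hN.length_le j)) hj
  · filter_upwards [hnoise] with j hj n hn
    have hη := (norm_nonneg _).trans (hj n hn)
    have hK : 2 ≤ 8 / T + 8 * L := by
      have : 8 ≤ 8 / T := (le_div_iff₀ hT₀).2 (by linarith)
      linarith [L.coe_nonneg]
    calc dist (θ n) (θ (N j)) ≤ 2 * (T * ‖gradient f (θ (N j))‖ + ν (N j) * γ (N j) ^ (-r)) := by
          rw [dist_eq_norm]
          exact norm_sub_le_of_sum_le hL hθ hα hrec (by linarith)
            ((hsum j).trans_le (hN.length_le j)) hj n hn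
      _ ≤ 2 * (1 * ‖gradient f (θ (N j))‖ + ν (N j) * γ (N j) ^ (-r)) := by gcongr
      _ ≤ _ := by rw [one_mul]; gcongr

theorem exists_isTimeGrid_blockDescent {γ α : ℕ → ℝ} {f : E → ℝ} (hf : Differentiable ℝ f)
    {s : Set E} (hs : Convex ℝ s) {L : NNReal} (hL : LipschitzOnWith L (gradient f) s)
    {θ ξ : ℕ → E} (hθ : ∀ k, θ k ∈ s) (hα : ∀ k, 0 < α k) (hα₀ : Tendsto α atTop (𝓝 0))
    (hγ : ∀ k, γ (k + 1) - γ k = α k) (hγ' : Tendsto γ atTop atTop)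
    (hrec : ∀ k, θ (k + 1) = θ k - α k • (gradient f (θ k) + ξ k)) {r : ℝ} (hr : 0 ≤ r) {ν : ℕ → ℝ}
    (hν : ∀ n i, n ≤ i → γ i - γ n ≤ 1 → ‖∑ k ∈ Finset.Ico n i, (α k * γ k ^ r) • ξ k‖ ≤ ν n) :
    ∃ T N c K, IsTimeGrid γ T N ∧
      BlockDescent f θ N c K fun j => ν (N j) * γ (N j) ^ (-r) := by
  have hmono : StrictMono γ := strictMono_nat_of_lt_succ fun k => by linarith [hα k, hγ k]
  obtain ⟨N, hN⟩ := exists_isTimeGrid hmono hγ' (by simpa only [hγ] using hα₀)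
    (by positivity : 0 < 1 / (64 * ((L : ℝ) + 1)))
  refine ⟨_, N, _, _, hN, hN.blockDescent hf hs hL hθ (fun k => (hα k).le) hγ hrec ?_ ?_ hr hν⟩
  · rw [div_le_one (by positivity)]
    linarith
  · rw [div_mul_eq_mul_div, div_le_div_iff₀ (by positivity) (by positivity)]
    linarith

namespace BlockDescent

variable {f : E → ℝ} {θ : ℕ → E} {N : ℕ → ℕ} {c K r : ℝ} {η : ℕ → ℝ}

theorem eventually_dist_succ_le (h : BlockDescent f θ N c K η) :
    ∀ᶠ j in atTop, dist (θ (N j)) (θ (N (j + 1))) ≤ K * (‖gradient f (θ (N j))‖ + η j) := by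
  filter_upwards [h.dist_le] with j hj
  rw [dist_comm]
  exact hj _ ⟨(h.strictMono j.lt_succ_self).le, le_rfl⟩

theorem exists_tendsto_value (h : BlockDescent f θ N c K η) (hr : 1 < r)
    (hη : η =O[atTop] fun j : ℕ => (j : ℝ) ^ (-r))
    (hbdd : BddBelow (Set.range fun j => f (θ (N j)))) :
    ∃ a, Tendsto (fun j => f (θ (N j))) atTop (𝓝 a) := by
  have he : Summable fun j => K * η j ^ 2 :=
    (summable_of_isBigO_nat (Real.summable_nat_rpow.2 (by linarith : -(2 * r) < -1))
      (isBigO_sq_natCast_rpow_neg hη)).mul_left K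
  refine exists_tendsto_of_succ_le_add_summable he hbdd ?_
  filter_upwards [h.descent] with j hj
  linarith [mul_nonneg h.c_pos.le (sq_nonneg ‖gradient f (θ (N j))‖)]

theorem lojasiewiczDescent (h : BlockDescent f θ N c K η) {a M μ : ℝ} (hM : 1 ≤ M)
    (hμ : μ ∈ Set.Ioc 1 2) (ha : Tendsto (fun j => f (θ (N j))) atTop (𝓝 a))
    (hloj : ∀ᶠ j in atTop, |f (θ (N j)) - a| ≤ M * ‖gradient f (θ (N j))‖ ^ μ) :
    LojasiewiczDescent c M μ (fun j => f (θ (N j)) - a) (fun j => ‖gradient f (θ (N j))‖)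
      fun j => K * η j ^ 2 where
  c_pos := h.c_pos
  c_le_one := h.c_le_one
  one_le_M := hM
  one_lt_exponent := hμ.1
  exponent_le_two := hμ.2
  grad_nonneg _ := norm_nonneg _
  tendsto_zero := by simpa using ha.sub_const a
  descent := by filter_upwards [h.descent] with j hj; linarith
  lojasiewicz := hloj

theorem exists_tendsto_of_summable (h : BlockDescent f θ N c K η)
    (hg : Summable fun j => ‖gradient f (θ (N j))‖) (hη : Summable η) :
    ∃ l, Tendsto θ atTop (𝓝 l) := by
  have hbound : Summable fun j => K * (‖gradient f (θ (N j))‖ + η j) := (hg.add hη).mul_left K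
  have hdist : Summable fun j => dist (θ (N j)) (θ (N (j + 1))) := by
    refine hbound.of_norm_bounded_eventually_nat ?_
    filter_upwards [h.eventually_dist_succ_le] with j hj
    rwa [Real.norm_of_nonneg dist_nonneg]
  obtain ⟨l, hl⟩ := cauchySeq_tendsto_of_complete (cauchySeq_of_summable_dist hdist)
  have hlim : Tendsto (fun j => K * (‖gradient f (θ (N j))‖ + η j) + dist (θ (N j)) l) atTop
      (𝓝 0) := by
    simpa using hbound.tendsto_atTop_zero.add (tendsto_iff_dist_tendsto_zero.1 hl)
  refine ⟨l, Metric.tendsto_nhds.2 fun ε hε => eventually_of_forall_block h.strictMono ?_⟩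
  filter_upwards [h.dist_le, hlim.eventually_lt_const hε] with j hj hsmall n hn
  exact (dist_triangle _ _ _).trans_lt ((add_le_add_left (hj n hn) _).trans_lt hsmall)

theorem exists_tendsto_of_isCompact (h : BlockDescent f θ N c K η) (hr : 1 < r)
    (hη : η =O[atTop] fun j : ℕ => (j : ℝ) ^ (-r)) {Q : Set E} (hQ : IsCompact Q)
    (hf : ContinuousOn f Q) (hθ : ∀ k, θ k ∈ Q)
    (hloj : ∀ b ∈ f '' Q, ∃ δ μ M : ℝ, 0 < δ ∧ μ ∈ Set.Ioc (1 : ℝ) 2 ∧ 1 ≤ M ∧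
      ∀ x ∈ Q, |f x - b| ≤ δ → |f x - b| ≤ M * ‖gradient f x‖ ^ μ) :
    ∃ l, Tendsto θ atTop (𝓝 l) := by
  have hfQ : IsCompact (f '' Q) := hQ.image_of_continuousOn hf
  have hmem : ∀ j, f (θ (N j)) ∈ f '' Q := fun j => Set.mem_image_of_mem f (hθ _)
  obtain ⟨a, ha⟩ := h.exists_tendsto_value hr hη
    (hfQ.bddBelow.mono (Set.range_subset_iff.2 hmem))
  obtain ⟨δ, μ, M, hδ, hμ, hM, hloj⟩ := hloj a
    (hfQ.isClosed.mem_of_tendsto ha (Eventually.of_forall hmem))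
  have hD := h.lojasiewiczDescent hM hμ ha <| by
    filter_upwards [Metric.tendsto_nhds.1 ha δ hδ] with j hj
    exact hloj _ (hθ _) hj.le
  exact h.exists_tendsto_of_summable
    (hD.summable_grad hr ((isBigO_sq_natCast_rpow_neg hη).const_mul_left K))
    (summable_of_isBigO_nat (Real.summable_nat_rpow.2 (by linarith)) hη)

section Rates

variable {s : Set E} {L : NNReal}

theorem exists_gradient_sq_le (h : BlockDescent f θ N c K η) (hL : LipschitzOnWith L (gradient f) s)
    (hθ : ∀ k, θ k ∈ s) :
    ∃ C, ∀ᶠ j in atTop, ∀ n ∈ Set.Icc (N j) (N (j + 1)),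
      ‖gradient f (θ n)‖ ^ 2 ≤ C * (‖gradient f (θ (N j))‖ ^ 2 + η j ^ 2) := by
  refine ⟨2 + 4 * (L * K) ^ 2, ?_⟩
  filter_upwards [h.dist_le] with j hj n hn
  set g := ‖gradient f (θ (N j))‖
  have hgrad : ‖gradient f (θ n)‖ ≤ g + L * (K * (g + η j)) := by
    refine (norm_le_norm_add_norm_sub' _ (gradient f (θ (N j)))).trans ?_
    gcongr
    refine (hL.norm_sub_le (hθ n) (hθ (N j))).trans ?_
    rw [← dist_eq_norm]
    exact mul_le_mul_of_nonneg_left (hj n hn) L.coe_nonneg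
  calc ‖gradient f (θ n)‖ ^ 2 ≤ (g + L * (K * (g + η j))) ^ 2 := by gcongr
    _ ≤ 2 * (g ^ 2 + (L * K) ^ 2 * (g + η j) ^ 2) := add_sq_le.trans_eq (by ring)
    _ ≤ 2 * (g ^ 2 + (L * K) ^ 2 * (2 * (g ^ 2 + η j ^ 2))) := by gcongr; exact add_sq_le
    _ ≤ _ := by nlinarith [sq_nonneg (η j)]

theorem exists_abs_value_sub_le (h : BlockDescent f θ N c K η) (hf : Differentiable ℝ f)
    (hs : Convex ℝ s) (hL : LipschitzOnWith L (gradient f) s) (hθ : ∀ k, θ k ∈ s) :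
    ∃ C, ∀ᶠ j in atTop, ∀ n ∈ Set.Icc (N j) (N (j + 1)),
      |f (θ n) - f (θ (N j))| ≤ C * (‖gradient f (θ (N j))‖ ^ 2 + η j ^ 2) := by
  have hK := h.K_pos
  refine ⟨2 * K + 2 * (L * K ^ 2), ?_⟩
  filter_upwards [h.dist_le] with j hj n hn
  have hclose := hj n hn
  rw [dist_eq_norm] at hclose
  set g := ‖gradient f (θ (N j))‖
  calc |f (θ n) - f (θ (N j))| ≤ g * ‖θ n - θ (N j)‖ + L * ‖θ n - θ (N j)‖ ^ 2 :=
        abs_sub_le_of_lipschitzOnWith_gradient hf hs hL (hθ _) (hθ _)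
    _ ≤ g * (K * (g + η j)) + L * (K * (g + η j)) ^ 2 := by gcongr
    _ = K * (g * (g + η j)) + L * K ^ 2 * (g + η j) ^ 2 := by ring
    _ ≤ K * (2 * (g ^ 2 + η j ^ 2)) + L * K ^ 2 * (2 * (g ^ 2 + η j ^ 2)) := by
        gcongr K * ?_ + L * K ^ 2 * ?_
        · nlinarith [sq_nonneg (g - η j), sq_nonneg (η j)]
        · exact add_sq_le
    _ = _ := by ring

variable {γ : ℕ → ℝ} {T M μ : ℝ} {l : E}

theorem isLittleO_gradient_sq_add_sq (hr : 0 ≤ r) (hrμ : r * (2 - μ) < 1)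
    (hη : η =o[atTop] fun j : ℕ => (j : ℝ) ^ (-r))
    (hD : LojasiewiczDescent c M μ (fun j => f (θ (N j)) - f l)
      (fun j => ‖gradient f (θ (N j))‖) fun j => K * η j ^ 2) :
    (fun j => ‖gradient f (θ (N j))‖ ^ 2 + η j ^ 2) =o[atTop]
      fun j : ℕ => (j : ℝ) ^ (-(μ * r)) := by
  refine (hD.isLittleO_grad_sq hr hrμ ((isLittleO_sq_natCast_rpow_neg hη).const_mul_left K)).add
    ((isLittleO_sq_natCast_rpow_neg hη).trans_isBigO (isBigO_natCast_rpow_rpow ?_))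
  nlinarith [hD.exponent_le_two]

theorem isLittleO_gradient_sq (h : BlockDescent f θ N c K η) (hN : IsTimeGrid γ T N)
    (hγ : Monotone γ) (hL : LipschitzOnWith L (gradient f) s) (hθ : ∀ k, θ k ∈ s) (hr : 0 ≤ r)
    (hrμ : r * (2 - μ) < 1) (hη : η =o[atTop] fun j : ℕ => (j : ℝ) ^ (-r))
    (hD : LojasiewiczDescent c M μ (fun j => f (θ (N j)) - f l)
      (fun j => ‖gradient f (θ (N j))‖) fun j => K * η j ^ 2) :
    (fun n => ‖gradient f (θ n)‖ ^ 2) =o[atTop] fun n => γ n ^ (-(μ * r)) := by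
  obtain ⟨C, hC⟩ := h.exists_gradient_sq_le hL hθ
  refine hN.isLittleO_of_block hγ (mul_nonneg (by linarith [hD.one_lt_exponent]) hr)
    ((isLittleO_gradient_sq_add_sq hr hrμ hη hD).const_mul_left C) ?_
  filter_upwards [hC] with j hj n hn
  rw [abs_of_nonneg (sq_nonneg _)]
  exact hj n hn

theorem isLittleO_value_sub (h : BlockDescent f θ N c K η) (hN : IsTimeGrid γ T N)
    (hγ : Monotone γ) (hf : Differentiable ℝ f) (hs : Convex ℝ s)
    (hL : LipschitzOnWith L (gradient f) s) (hθ : ∀ k, θ k ∈ s) (hr : 0 ≤ r)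
    (hrμ : r * (2 - μ) < 1) (hη : η =o[atTop] fun j : ℕ => (j : ℝ) ^ (-r))
    (hD : LojasiewiczDescent c M μ (fun j => f (θ (N j)) - f l)
      (fun j => ‖gradient f (θ (N j))‖) fun j => K * η j ^ 2) :
    (fun n => f (θ n) - f l) =o[atTop] fun n => γ n ^ (-(μ * r)) := by
  obtain ⟨C, hC⟩ := h.exists_abs_value_sub_le hf hs hL hθ
  refine hN.isLittleO_of_block hγ (mul_nonneg (by linarith [hD.one_lt_exponent]) hr)
    (((isLittleO_gradient_sq_add_sq hr hrμ hη hD).const_mul_left C).add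
      (hD.isLittleO_value hr hrμ
        ((isLittleO_sq_natCast_rpow_neg hη).const_mul_left K)).norm_left) ?_
  filter_upwards [hC] with j hj n hn
  exact (abs_sub_le _ _ _).trans (add_le_add_left (hj n hn) _)

theorem isLittleO_dist (h : BlockDescent f θ N c K η) (hN : IsTimeGrid γ T N)
    (hγ : Monotone γ) (hl : Tendsto θ atTop (𝓝 l)) (hr : 1 < r)
    (hrμ : r * (2 - μ) < 1) (hη : η =o[atTop] fun j : ℕ => (j : ℝ) ^ (-r))
    (hD : LojasiewiczDescent c M μ (fun j => f (θ (N j)) - f l)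
      (fun j => ‖gradient f (θ (N j))‖) fun j => K * η j ^ 2) :
    (fun n => dist (θ n) l) =o[atTop] fun n => γ n ^ (-(r - 1)) := by
  have he := (isLittleO_sq_natCast_rpow_neg hη).const_mul_left K
  have hη' : η =o[atTop] fun j : ℕ => (j : ℝ) ^ (-(r - 1)) :=
    hη.trans_isBigO (isBigO_natCast_rpow_rpow (by linarith))
  refine hN.isLittleO_of_block hγ (by linarith)
    ((((hD.isLittleO_grad (by linarith) hrμ he).add hη').const_mul_left K).add
      (hD.isLittleO_dist hr hrμ he (hl.comp h.strictMono.tendsto_atTop) h.K_pos hη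
        h.eventually_dist_succ_le)) ?_
  filter_upwards [h.dist_le] with j hj n hn
  rw [abs_of_nonneg dist_nonneg]
  exact (dist_triangle _ _ _).trans (add_le_add_left (hj n hn) _)

end Rates

end BlockDescent

end BlockDescents

section WindowedNoise

variable {E : Type*} [SeminormedAddCommGroup E]

theorem windowed_noise_nonneg (v : ℕ → E) (n m : ℕ) :
    0 ≤ ⨆ k ∈ Set.Ico n m, ‖∑ i ∈ Finset.Icc n k, v i‖ :=
  Real.iSup_nonneg fun _ => Real.iSup_nonneg fun _ => norm_nonneg _

theorem norm_sum_Ico_le_windowed_noise {γ : ℕ → ℝ} (hγ : Tendsto γ atTop atTop) (v : ℕ → E)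
    {t : ℝ} {n i : ℕ} (hni : n ≤ i) (hi : γ i - γ n ≤ t) :
    ‖∑ k ∈ Finset.Ico n i, v k‖ ≤
      ⨆ k ∈ Set.Ico n (sSup {k | n ≤ k ∧ γ k - γ n ≤ t}), ‖∑ i ∈ Finset.Icc n k, v i‖ := by
  rcases hni.eq_or_lt with rfl | hlt
  · simpa using windowed_noise_nonneg v n _
  obtain ⟨k, rfl⟩ := Nat.exists_eq_add_one_of_ne_zero (Nat.ne_zero_of_lt hlt)
  have hbdd : BddAbove {k | n ≤ k ∧ γ k - γ n ≤ t} := by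
    obtain ⟨m, hm⟩ := eventually_atTop.1 (hγ.eventually_gt_atTop (γ n + t))
    refine ⟨m, fun k hk => le_of_not_ge fun hmk => ?_⟩
    linarith [hm k hmk, hk.2]
  have hk : k ∈ Set.Ico n (sSup {k | n ≤ k ∧ γ k - γ n ≤ t}) :=
    ⟨Nat.lt_succ_iff.1 hlt, Nat.lt_of_succ_le (le_csSup hbdd ⟨hni, hi⟩)⟩
  rw [Finset.Ico_add_one_right_eq_Icc]
  have hfin := ((Set.finite_Ico n (sSup {k | n ≤ k ∧ γ k - γ n ≤ t})).image
    fun k => ‖∑ i ∈ Finset.Icc n k, v i‖).bddAbove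
  refine le_ciSup₂ (f := fun k _ => ‖∑ i ∈ Finset.Icc n k, v i‖) (hfin.mono ?_) k hk
  exact Set.iUnion_subset fun k => Set.range_subset_iff.2 fun hk => Set.mem_image_of_mem _ hk

theorem tendsto_zero_of_limsup_eq_zero {u : ℕ → ℝ} (hu : ∀ n, 0 ≤ u n)
    (hbdd : IsBoundedUnder (· ≤ ·) atTop u) (hlim : limsup u atTop = 0) :
    Tendsto u atTop (𝓝 0) :=
  tendsto_order.2 ⟨fun _ ha => Eventually.of_forall fun n => ha.trans_le (hu n),
    fun _ ha => eventually_lt_of_limsup_lt (hlim.trans_lt ha) hbdd⟩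

end WindowedNoise

section Exponents

variable {r μ : ℝ}

theorem mul_two_sub_lt_one (hμ : μ ≤ 2) (h : μ = 2 ∨ r < 1 / (2 - μ)) : r * (2 - μ) < 1 := by
  rcases hμ.eq_or_lt with rfl | hμ
  · norm_num
  · exact (lt_div_iff₀ (by linarith)).1 (h.resolve_left hμ.ne)

theorem ite_min_one_div_two_sub_eq (h : r * (2 - μ) < 1) :
    (if μ < 2 then min r (1 / (2 - μ)) else r) = r := by
  split_ifs with hμ
  · exact min_eq_left ((le_div_iff₀ (by linarith)).2 h.le)
  · rfl

end Exponents

theorem exists_isCompact_convex_superset {E : Type*} [NormedAddCommGroup E] [NormedSpace ℝ E]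
    [CompleteSpace E] {t : Set E} (ht : TotallyBounded t) :
    ∃ s, IsCompact s ∧ Convex ℝ s ∧ t ⊆ s :=
  ⟨closure (convexHull ℝ t), ht.convexHull.closure.isCompact_of_isClosed isClosed_closure,
    (convex_convexHull ℝ t).closure, (subset_convexHull ℝ t).trans subset_closure⟩

theorem exists_tendsto_and_isLittleO_rates
    {E : Type*} [NormedAddCommGroup E] [InnerProductSpace ℝ E] [CompleteSpace E]
    {f : E → ℝ} (hf : Differentiable ℝ f) (hgrad : LocallyLipschitz (gradient f))
    {s : Set E} (hs : IsCompact s) (hconv : Convex ℝ s)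
    {α γ : ℕ → ℝ} (hα : ∀ n, 0 < α n) (hα₀ : Tendsto α atTop (𝓝 0))
    (hγα : ∀ n, γ (n + 1) - γ n = α n) (hγ : Tendsto γ atTop atTop)
    {θ ξ : ℕ → E} (hθ : ∀ n, θ n ∈ s)
    (hrec : ∀ n, θ (n + 1) = θ n - α n • (gradient f (θ n) + ξ n))
    {r : ℝ} (hr : 1 < r) {ν : ℕ → ℝ} (hν : ν =O[atTop] fun _ => (1 : ℝ))
    (hξ : ∀ n i, n ≤ i → γ i - γ n ≤ 1 → ‖∑ k ∈ Finset.Ico n i, (α k * γ k ^ r) • ξ k‖ ≤ ν n)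
    (hloj : ∀ b ∈ f '' s, ∃ δ μ M : ℝ, 0 < δ ∧ μ ∈ Set.Ioc (1 : ℝ) 2 ∧ 1 ≤ M ∧
      ∀ x ∈ s, |f x - b| ≤ δ → |f x - b| ≤ M * ‖gradient f x‖ ^ μ) :
    ∃ l, Tendsto θ atTop (𝓝 l) ∧ (Tendsto ν atTop (𝓝 0) → ∀ μ ∈ Set.Ioc (1 : ℝ) 2, ∀ M, 1 ≤ M →
      (∀ᶠ y in 𝓝 l, |f y - f l| ≤ M * ‖gradient f y‖ ^ μ) → r * (2 - μ) < 1 →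
        ((fun n => ‖gradient f (θ n)‖ ^ 2) =o[atTop] fun n => γ n ^ (-(μ * r))) ∧
        ((fun n => f (θ n) - f l) =o[atTop] fun n => γ n ^ (-(μ * r))) ∧
        ((fun n => dist (θ n) l) =o[atTop] fun n => γ n ^ (-(r - 1)))) := by
  have hmono : Monotone γ := monotone_nat_of_le_succ fun k => by linarith [hα k, hγα k]
  have hr₀ : 0 ≤ r := by linarith
  obtain ⟨L, hL⟩ := hgrad.locallyLipschitzOn.exists_lipschitzOnWith_of_compact hs
  obtain ⟨T, N, c, K, hN, hB⟩ :=
    exists_isTimeGrid_blockDescent hf hconv hL hθ hα hα₀ hγα hγ hrec hr₀ hξ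
  obtain ⟨l, hl⟩ := hB.exists_tendsto_of_isCompact hr (hN.isBigO_mul_rpow hν (-r)) hs
    hf.continuous.continuousOn hθ hloj
  refine ⟨l, hl, fun hν₀ μ hμ M hM hlocal hrμ => ?_⟩
  have hη := hN.isLittleO_mul_rpow hν₀ (-r)
  have hlN := hl.comp hN.strictMono.tendsto_atTop
  have hD := hB.lojasiewiczDescent hM hμ ((hf.continuous.tendsto l).comp hlN)
    (hlN.eventually hlocal)
  exact ⟨hB.isLittleO_gradient_sq hN hmono hL hθ hr₀ hrμ hη hD,
    hB.isLittleO_value_sub hN hmono hf hconv hL hθ hr₀ hrμ hη hD,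
    hB.isLittleO_dist hN hmono hl hr hrμ hη hD⟩

theorem stochastic_gradient_little_o_rates_general
    {E : Type*} [NormedAddCommGroup E] [InnerProductSpace ℝ E] [CompleteSpace E]
    {Ω : Type*} [MeasurableSpace Ω] (P : Measure Ω)
    {f : E → ℝ} (hf : Differentiable ℝ f) (hgrad : LocallyLipschitz (gradient f))
    {α γ : ℕ → ℝ} (hα : ∀ n, 0 < α n) (hα₀ : Tendsto α atTop (𝓝 0))
    (hγα : ∀ n, γ n = ∑ i ∈ Finset.range n, α i) (hγ : Tendsto γ atTop atTop)
    {θ ξ : ℕ → Ω → E} (hrec : ∀ n ω, θ (n + 1) ω = θ n ω - α n • (gradient f (θ n ω) + ξ n ω))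
    {a : ℕ → ℝ → ℕ} (ha : ∀ n t, 0 < t → a n t = sSup {k | n ≤ k ∧ γ k - γ n ≤ t})
    {Λ : Set Ω} (hΛ : ∀ ω ∈ Λ, TotallyBounded (Set.range fun n => θ n ω))
    {r : ℝ} (hr : 1 < r) {noise : ℕ → Ω → ℝ}
    (hnoise : ∀ n ω, noise n ω =
      ⨆ k ∈ Set.Ico n (a n 1), ‖∑ i ∈ Finset.Icc n k, (α i * γ i ^ r) • ξ i ω‖)
    (hbdd : ∀ᵐ ω ∂P, ω ∈ Λ → IsBoundedUnder (· ≤ ·) atTop fun n => noise n ω)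
    {Xi : Ω → ℝ} (hXi : ∀ ω, Xi ω = limsup (fun n => noise n ω) atTop)
    (hloj : ∀ Q : Set E, IsCompact Q → ∀ b ∈ f '' Q,
      ∃ δ μ M : ℝ, δ ∈ Set.Ioc (0 : ℝ) 1 ∧ μ ∈ Set.Ioc (1 : ℝ) 2 ∧ 1 ≤ M ∧
        ∀ x ∈ Q, |f x - b| ≤ δ → |f x - b| ≤ M * ‖gradient f x‖ ^ μ)
    {δl μl Ml : E → ℝ} (hδl : ∀ x, δl x ∈ Set.Ioc (0 : ℝ) 1)
    (hμl : ∀ x, μl x ∈ Set.Ioc (1 : ℝ) 2) (hMl : ∀ x, 1 ≤ Ml x)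
    (hlocal : ∀ x y, ‖y - x‖ ≤ δl x → |f y - f x| ≤ Ml x * ‖gradient f y‖ ^ μl x)
    {rmin p q : E → ℝ} (hrmin : ∀ x, rmin x = if μl x < 2 then min r (1 / (2 - μl x)) else r)
    (hp : ∀ x, p x = μl x * rmin x) (hq : ∀ x, q x = rmin x - 1) :
    ∀ᵐ ω ∂P, ω ∈ Λ →
      ∃ l, Tendsto (fun n => θ n ω) atTop (𝓝 l) ∧
        ((Xi ω = 0 ∧ (μl l = 2 ∨ r < 1 / (2 - μl l))) →
          ((fun n => ‖gradient f (θ n ω)‖ ^ 2) =o[atTop] fun n => γ n ^ (-(p l))) ∧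
          ((fun n => |f (θ n ω) - f l|) =o[atTop] fun n => γ n ^ (-(p l))) ∧
          ((fun n => ‖θ n ω - l‖) =o[atTop] fun n => γ n ^ (-(q l)))) := by
  filter_upwards [hbdd] with ω hω hωΛ
  obtain ⟨s, hs, hconv, hθ⟩ := exists_isCompact_convex_superset (hΛ ω hωΛ)
  rw [Set.range_subset_iff] at hθ
  have hnoise₀ : ∀ n, 0 ≤ noise n ω := fun n => hnoise n ω ▸ windowed_noise_nonneg _ n _
  have hwindow : ∀ n i, n ≤ i → γ i - γ n ≤ 1 →
      ‖∑ k ∈ Finset.Ico n i, (α k * γ k ^ r) • ξ k ω‖ ≤ noise n ω := fun n i hni hi => by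
    rw [hnoise, ha n 1 one_pos]
    exact norm_sum_Ico_le_windowed_noise hγ _ hni hi
  obtain ⟨l, hl, hrates⟩ := exists_tendsto_and_isLittleO_rates hf hgrad hs hconv hα hα₀
    (fun n => by simp [hγα, Finset.sum_range_succ]) hγ hθ (hrec · ω) hr
    ((isBigO_one_iff ℝ).2 (by simpa only [Real.norm_of_nonneg (hnoise₀ _)] using hω hωΛ)) hwindow
    fun b hb => (hloj s hs b hb).imp fun δ ⟨μ, M, hδ, h⟩ => ⟨μ, M, hδ.1, h⟩
  refine ⟨l, hl, fun ⟨hXi₀, hμr⟩ => ?_⟩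
  have hrμ := mul_two_sub_lt_one (hμl l).2 hμr
  obtain ⟨hgrad, hvalue, hdist⟩ := hrates
    (tendsto_zero_of_limsup_eq_zero hnoise₀ (hω hωΛ) (hXi ω ▸ hXi₀)) (μl l) (hμl l) (Ml l) (hMl l)
    (eventually_of_mem (Metric.closedBall_mem_nhds l (hδl l).1) fun y hy =>
      hlocal l y (mem_closedBall_iff_norm.1 hy)) hrμ
  rw [hp, hq, hrmin, ite_min_one_div_two_sub_eq hrμ]
  exact ⟨hgrad, hvalue.norm_left, by simpa only [dist_eq_norm] using hdist⟩

/-- Corollary 1.1 (i) of the paper: under Assumptions 1.1,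
1.2, 1.3, almost surely on `Λ ∩ {ξ = 0, r̂ > r}` (with `θ̂ = lim θ_n`):
`‖∇f(θ_n)‖² = o(γ_n^{−p̂})`, `|f(θ_n) − f(θ̂)| = o(γ_n^{−p̂})` and
`‖θ_n − θ̂‖ = o(γ_n^{−q̂})`.  (`r̂ > r` is the condition
`μ̂ = 2 ∨ r < 1/(2 − μ̂)`.) -/
theorem stochastic_gradient_little_o_rates
    {d : ℕ} (hd : 1 ≤ d)
    {Ω : Type} [MeasurableSpace Ω] (P : Measure Ω) [IsProbabilityMeasure P]
    (f : EuclideanSpace ℝ (Fin d) → ℝ)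
    (hfd : Differentiable ℝ f)
    (hlip : LocallyLipschitz (fun x => gradient f x))
    (α : ℕ → ℝ) (hαpos : ∀ n, 0 < α n)
    (θ ξ : ℕ → Ω → EuclideanSpace ℝ (Fin d))
    (hrec : ∀ n ω, θ (n + 1) ω = θ n ω - α n • (gradient f (θ n ω) + ξ n ω))
    -- Assumption 1.1
    (hα0 : Tendsto α atTop (nhds 0))
    (γ : ℕ → ℝ) (hγ : ∀ n, γ n = ∑ i ∈ Finset.range n, α i)
    (hαdiv : Tendsto γ atTop atTop)
    -- the interpolation index `a(n,t)`
    (a : ℕ → ℝ → ℕ)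
    (ha : ∀ n t, 0 < t → a n t = sSup {k | n ≤ k ∧ γ k - γ n ≤ t})
    -- the event Λ
    (Λ : Set Ω) (hΛ : Λ = {ω | ∃ C, ∀ n, ‖θ n ω‖ ≤ C})
    -- Assumption 1.2
    (r : ℝ) (hr : 1 < r)
    (noise : ℕ → Ω → ℝ)
    (hnoise : ∀ n ω, noise n ω =
      ⨆ k ∈ Set.Ico n (a n 1), ‖∑ i ∈ Finset.Icc n k, (α i * γ i ^ r) • ξ i ω‖)
    (hA12 : ∀ᵐ ω ∂P, ω ∈ Λ → IsBoundedUnder (· ≤ ·) atTop (fun n => noise n ω))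
    (Xi : Ω → ℝ) (hXi : ∀ ω, Xi ω = Filter.limsup (fun n => noise n ω) atTop)
    -- Assumption 1.3 (Łojasiewicz-type gradient inequality)
    (hLoj : ∀ Q : Set (EuclideanSpace ℝ (Fin d)), IsCompact Q → ∀ b ∈ f '' Q,
      ∃ δ μ M : ℝ, δ ∈ Set.Ioc (0 : ℝ) 1 ∧ μ ∈ Set.Ioc (1 : ℝ) 2 ∧ 1 ≤ M ∧
        ∀ x ∈ Q, |f x - b| ≤ δ → |f x - b| ≤ M * ‖gradient f x‖ ^ μ)
    -- the local Łojasiewicz data `δ_θ, μ_θ, M_θ` provided by Assumption 1.3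
    (δl μl Ml : EuclideanSpace ℝ (Fin d) → ℝ)
    (hδl : ∀ x, δl x ∈ Set.Ioc (0 : ℝ) 1)
    (hμl : ∀ x, μl x ∈ Set.Ioc (1 : ℝ) 2)
    (hMl : ∀ x, 1 ≤ Ml x)
    (hLocal : ∀ x y, ‖y - x‖ ≤ δl x → |f y - f x| ≤ Ml x * ‖gradient f y‖ ^ μl x)
    -- `min{r, r_θ}`, `p_θ = μ_θ min{r, r_θ}` and `q_θ = min{r, r_θ} − 1`
    (rmin p q : EuclideanSpace ℝ (Fin d) → ℝ)
    (hrmin : ∀ x, rmin x = if μl x < 2 then min r (1 / (2 - μl x)) else r)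
    (hp : ∀ x, p x = μl x * rmin x)
    (hq : ∀ x, q x = rmin x - 1) :
    ∀ᵐ ω ∂P, ω ∈ Λ →
      ∃ θhat, Tendsto (fun n => θ n ω) atTop (nhds θhat) ∧
        ((Xi ω = 0 ∧ (μl θhat = 2 ∨ r < 1 / (2 - μl θhat))) →
          ((fun n => ‖gradient f (θ n ω)‖ ^ 2) =o[atTop] fun n => γ n ^ (-(p θhat))) ∧
          ((fun n => |f (θ n ω) - f θhat|) =o[atTop] fun n => γ n ^ (-(p θhat))) ∧
          ((fun n => ‖θ n ω - θhat‖) =o[atTop] fun n => γ n ^ (-(q θhat)))) := by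
  exact stochastic_gradient_little_o_rates_general P hfd hlip hαpos hα0 hγ hαdiv hrec ha
    (hΛ ▸ fun ω ⟨C, hC⟩ => (isCompact_closedBall 0 C).totallyBounded.subset
      (Set.range_subset_iff.2 fun n => mem_closedBall_zero_iff.2 (hC n)))
    hr hnoise hA12 hXi hLoj hδl hμl hMl hLocal hrmin hp hq
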